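/- For every ε > 0 there exists K_ε > 0 such that for all convergents p_n/q_n of ∛2 with d_n = 2·q_n^3 − p_n^3 ≠ 0: max(p_n^3, 2·q_n^3) < K_ε · (|d_n| · p_n · q_n · 2)^{1+ε}. -/

import Mathlib

set_option linter.all false
namespace WN
open MvPolynomial

/-- product of binomials -/
def mch {n : ℕ} (S I : Fin n →₀ ℕ) : ℕ := ∏ h, (S h).choose (I h)

/-- translation -/
noncomputable def tr {n : ℕ} {R : Type*} [CommRing R] (β : Fin n → R) :
    MvPolynomial (Fin n) R →ₐ[R] MvPolynomial (Fin n) R :=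
  aeval (fun i => X i + C (β i))

/-- Hasse derivative -/
noncomputable def hd {n : ℕ} {R : Type*} [CommRing R] (I : Fin n →₀ ℕ)
    (P : MvPolynomial (Fin n) R) : MvPolynomial (Fin n) R :=
  ∑ S ∈ P.support, monomial (S - I) ((mch S I : R) * coeff S P)

lemma mch_eq_zero {n : ℕ} {S I : Fin n →₀ ℕ} (h : ¬ I ≤ S) : mch S I = 0 := by
  have : ∃ i, S i < I i := by
    by_contra hc
    push Not at hc
    exact h hc
  obtain ⟨i, hi⟩ := this
  exact Finset.prod_eq_zero (Finset.mem_univ i) (Nat.choose_eq_zero_of_lt hi)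

section
variable {n : ℕ} {R : Type*} [CommRing R]

lemma coeff_hd (I J : Fin n →₀ ℕ) (P : MvPolynomial (Fin n) R) :
    coeff J (hd I P) = (mch (J + I) I : R) * coeff (J + I) P := by
  classical
  unfold hd
  rw [coeff_sum, Finset.sum_eq_single (J + I)]
  · simp
  · intro S hS hne
    rw [coeff_monomial]
    split_ifs with h
    · by_cases hI : I ≤ S
      · exfalso; apply hne; rw [← h]; exact (tsub_add_cancel_of_le hI).symm
      · rw [mch_eq_zero hI]; simp
    · rfl
  · intro h
    rw [notMem_support_iff] at h
    simp [h]

lemma hd_add (I : Fin n →₀ ℕ) (P Q : MvPolynomial (Fin n) R) : hd I (P + Q) = hd I P + hd I Q := by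
  ext J; simp [coeff_hd, mul_add]

lemma hd_zero (P : MvPolynomial (Fin n) R) : hd 0 P = P := by
  ext J; simp [coeff_hd, mch]

lemma hd_sum {ι : Type*} (s : Finset ι) (f : ι → MvPolynomial (Fin n) R) (I : Fin n →₀ ℕ) :
    hd I (∑ i ∈ s, f i) = ∑ i ∈ s, hd I (f i) := by
  ext J; simp [coeff_hd, coeff_sum, Finset.mul_sum]

lemma hd_map {S : Type*} [CommRing S] (f : R →+* S) (I : Fin n →₀ ℕ) (P : MvPolynomial (Fin n) R) :
    hd I (map f P) = map f (hd I P) := by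
  ext J; simp [coeff_hd, coeff_map]

lemma hd_monomial (I S : Fin n →₀ ℕ) (c : R) :
    hd I (monomial S c) = monomial (S - I) ((mch S I : R) * c) := by
  classical
  ext J
  rw [coeff_hd, coeff_monomial, coeff_monomial]
  by_cases hI : I ≤ S
  · by_cases h : S = J + I
    · subst h; simp
    · have : ¬ (S - I = J) := by
        intro h'; apply h; rw [← h', tsub_add_cancel_of_le hI]
      simp [h, this]
  · rw [mch_eq_zero hI]
    have : ¬ (S = J + I) := by
      intro h'; apply hI; rw [h']; exact le_add_self
    simp [this]

lemma coeff_tr (β : Fin n → R) (I : Fin n →₀ ℕ) (P : MvPolynomial (Fin n) R) :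
    coeff I (tr β P) = eval β (hd I P) := by
  classical
  induction P using MvPolynomial.induction_on' with
  | add p q hp hq => rw [map_add, coeff_add, hp, hq, hd_add, map_add]
  | monomial S c =>
    rw [hd_monomial, eval_monomial]
    unfold tr
    rw [aeval_monomial, Finsupp.prod_fintype _ _ (by simp)]
    have h1 : ∀ i : Fin n, (X i + C (β i) : MvPolynomial (Fin n) R) ^ (S i)
        = ∑ k ∈ Finset.range (S i + 1), C (((S i).choose k : R) * β i ^ (S i - k)) * X i ^ k := by
      intro i
      rw [add_pow]
      refine Finset.sum_congr rfl fun k hk => ?_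
      simp only [map_mul, map_pow, map_natCast]; ring
    rw [Finset.prod_congr rfl (fun i _ => h1 i), Finset.prod_univ_sum]
    have h2 : ∀ K : Fin n → ℕ, ∏ i, (C (((S i).choose (K i) : R) * β i ^ (S i - K i)) * X i ^ (K i) : MvPolynomial (Fin n) R) = monomial (Finsupp.equivFunOnFinite.symm K) (∏ i, (((S i).choose (K i) : R) * β i ^ (S i - K i))) := by
      intro K
      rw [Finset.prod_mul_distrib, ← map_prod, monomial_eq, Finsupp.prod_fintype _ _ (by simp)]
      simp
    simp_rw [h2]
    rw [algebraMap_eq, coeff_C_mul, coeff_sum]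
    simp_rw [coeff_monomial]
    have h3 : ∀ K : Fin n → ℕ, (Finsupp.equivFunOnFinite.symm K = I) ↔ (K = ⇑I) := by
      intro K
      constructor
      · rintro rfl; rfl
      · intro h; ext i; simp [h]
    simp_rw [h3]
    rw [Finset.sum_ite_eq']
    rw [Finsupp.prod_fintype _ _ (by simp)]
    have h4 : ∏ i, (((S i).choose (I i) : R) * β i ^ (S i - I i)) = (mch S I : R) * ∏ i, β i ^ ((S - I) i) := by
      rw [Finset.prod_mul_distrib]; simp [mch]
    split_ifs with h
    · rw [h4]; ring
    · have : ¬ I ≤ S := by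
        intro hI; apply h; simp only [Fintype.mem_piFinset, Finset.mem_range]
        intro i; exact Nat.lt_succ_of_le (hI i)
      rw [mch_eq_zero this]; simp

lemma mch_comp (I J K : Fin n →₀ ℕ) :
    mch (K + J) J * mch (K + J + I) I = mch (I + J) I * mch (K + (J + I)) (J + I) := by
  unfold mch
  rw [← Finset.prod_mul_distrib, ← Finset.prod_mul_distrib]
  refine Finset.prod_congr rfl fun i _ => ?_
  simp only [Finsupp.add_apply]
  have e1 := Nat.add_choose_mul_factorial_mul_factorial (K i) (J i)
  have e2 := Nat.add_choose_mul_factorial_mul_factorial (K i + J i) (I i)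
  have e3 := Nat.add_choose_mul_factorial_mul_factorial (J i) (I i)
  have e4 := Nat.add_choose_mul_factorial_mul_factorial (K i) (J i + I i)
  have s1 : (K i + J i).choose (K i) = (K i + J i).choose (J i) := Nat.choose_symm_add
  have s2 : (K i + J i + I i).choose (K i + J i) = (K i + J i + I i).choose (I i) := Nat.choose_symm_add
  have s3 : (J i + I i).choose (J i) = (J i + I i).choose (I i) := Nat.choose_symm_add
  have s4 : (K i + (J i + I i)).choose (K i) = (K i + (J i + I i)).choose (J i + I i) := Nat.choose_symm_add
  have c3 : (I i + J i).choose (I i) = (J i + I i).choose (I i) := by rw [add_comm]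
  rw [c3]
  have pos : 0 < (K i).factorial * (J i).factorial * (I i).factorial := by positivity
  apply Nat.eq_of_mul_eq_mul_right pos
  have e5 : K i + (J i + I i) = K i + J i + I i := by ring
  calc _ = ((K i + J i).choose (J i) * (K i).factorial * (J i).factorial) * (K i + J i + I i).choose (I i) * (I i).factorial := by ring
    _ = (K i + J i + I i).factorial := by rw [e1, ← e2]; ring
    _ = (K i + (J i + I i)).choose (J i + I i) * (K i).factorial * ((J i + I i).choose (I i) * (J i).factorial * (I i).factorial) := by rw [e3, e4, e5]
    _ = _ := by ring

lemma hd_hd (I J : Fin n →₀ ℕ) (P : MvPolynomial (Fin n) R) :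
    hd J (hd I P) = C (mch (I + J) I : R) * hd (J + I) P := by
  ext K
  rw [coeff_C_mul, coeff_hd, coeff_hd, coeff_hd, ← mul_assoc, ← mul_assoc, ← Nat.cast_mul, ← Nat.cast_mul, mch_comp, add_assoc]

lemma coeff_tr_hd (β : Fin n → R) (I J : Fin n →₀ ℕ) (P : MvPolynomial (Fin n) R) :
    coeff J (tr β (hd I P)) = (mch (I + J) I : R) * coeff (J + I) (tr β P) := by
  rw [coeff_tr, coeff_tr, hd_hd]; simp

lemma tr_tr (β γ : Fin n → R) (P : MvPolynomial (Fin n) R) :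
    tr γ (tr β P) = tr (γ + β) P := by
  have : (tr γ).comp (tr β) = tr (γ + β) := by
    ext1 i
    simp [tr]; ring
  rw [← this]; rfl

lemma pderiv_hd (h : Fin n) (I : Fin n →₀ ℕ) (P : MvPolynomial (Fin n) R) :
    pderiv h (hd I P) = C ((I h + 1 : ℕ) : R) * hd (I + Finsupp.single h 1) P := by
  have key : ∀ Q : MvPolynomial (Fin n) R, pderiv h Q = hd (Finsupp.single h 1) Q := by
    intro Q
    induction Q using MvPolynomial.induction_on' with
    | add p q hp hq => rw [map_add, hp, hq, hd_add]
    | monomial S c =>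
      rw [pderiv_monomial, hd_monomial]
      congr 1
      have : mch S (Finsupp.single h 1) = S h := by
        unfold mch
        rw [Finset.prod_eq_single h]
        · simp
        · intro b _ hb; simp [Finsupp.single_eq_of_ne hb]
        · simp
      rw [this, mul_comm]
  rw [key, hd_hd, add_comm I]
  congr 3
  unfold mch
  rw [Finset.prod_eq_single h]
  · simp [add_comm 1 (I h)]
  · intro b _ hb; simp [Finsupp.single_eq_of_ne hb]
  · simp
end

/-- length -/
noncomputable def len {σ : Type*} (P : MvPolynomial σ ℝ) : ℝ := ∑ S ∈ P.support, |coeff S P|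

section
variable {σ : Type*}

lemma len_eq {P : MvPolynomial σ ℝ} {s : Finset (σ →₀ ℕ)} (h : P.support ⊆ s) :
    len P = ∑ S ∈ s, |coeff S P| := by
  apply Finset.sum_subset h
  intro x _ hx
  rw [notMem_support_iff] at hx
  simp [hx]

lemma len_nonneg (P : MvPolynomial σ ℝ) : 0 ≤ len P := Finset.sum_nonneg fun _ _ => abs_nonneg _

lemma len_add (P Q : MvPolynomial σ ℝ) : len (P + Q) ≤ len P + len Q := by
  classical
  rw [len_eq (support_add (p := P) (q := Q)), len_eq (Finset.subset_union_left (s₁ := P.support) (s₂ := Q.support)),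
    len_eq (Finset.subset_union_right (s₁ := P.support) (s₂ := Q.support)), ← Finset.sum_add_distrib]
  refine Finset.sum_le_sum fun S _ => ?_
  rw [coeff_add]; exact abs_add_le _ _

lemma len_zero : len (0 : MvPolynomial σ ℝ) = 0 := by simp [len]

lemma len_sum {ι : Type*} (s : Finset ι) (f : ι → MvPolynomial σ ℝ) :
    len (∑ i ∈ s, f i) ≤ ∑ i ∈ s, len (f i) := by
  classical
  induction s using Finset.induction_on with
  | empty => simp [len_zero]
  | insert a s ha ih =>
    rw [Finset.sum_insert ha, Finset.sum_insert ha]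
    exact (len_add _ _).trans (by linarith)

lemma len_monomial (S : σ →₀ ℕ) (c : ℝ) : len (monomial S c) = |c| := by
  classical
  rw [len_eq (support_monomial_subset)]
  simp

lemma len_mul (P Q : MvPolynomial σ ℝ) : len (P * Q) ≤ len P * len Q := by
  have h : P * Q = ∑ S ∈ P.support, ∑ T ∈ Q.support, monomial (S + T) (coeff S P * coeff T Q) := by
    conv_lhs => rw [P.as_sum, Q.as_sum, Finset.sum_mul_sum]
    simp [monomial_mul]
  rw [h]
  refine (len_sum _ _).trans ?_
  unfold len
  rw [Finset.sum_mul_sum]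
  refine Finset.sum_le_sum fun S _ => (len_sum _ _).trans ?_
  refine Finset.sum_le_sum fun T _ => ?_
  rw [len_monomial, abs_mul]

lemma len_one : len (1 : MvPolynomial σ ℝ) = 1 := by
  have := len_monomial (σ := σ) 0 1
  simpa using this

lemma len_neg (P : MvPolynomial σ ℝ) : len (-P) = len P := by simp [len]

lemma len_C (c : ℝ) : len (C c : MvPolynomial σ ℝ) = |c| := len_monomial 0 c

lemma len_X (i : σ) : len (X i : MvPolynomial σ ℝ) = 1 := by
  have := len_monomial (σ := σ) (Finsupp.single i 1) 1
  rw [abs_one] at this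
  exact this

lemma len_prod {ι : Type*} (s : Finset ι) (f : ι → MvPolynomial σ ℝ) :
    len (∏ i ∈ s, f i) ≤ ∏ i ∈ s, len (f i) := by
  classical
  induction s using Finset.induction_on with
  | empty => simp [len_one]
  | insert a s ha ih =>
    rw [Finset.prod_insert ha, Finset.prod_insert ha]
    exact (len_mul _ _).trans (mul_le_mul_of_nonneg_left ih (len_nonneg _))

lemma len_pow (P : MvPolynomial σ ℝ) (k : ℕ) : len (P ^ k) ≤ len P ^ k := by
  have := len_prod (Finset.range k) (fun _ => P)
  simpa using this

lemma len_det {k : ℕ} (M : Matrix (Fin k) (Fin k) (MvPolynomial σ ℝ)) (B : ℝ)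
    (hB : ∀ i j, len (M i j) ≤ B) : len M.det ≤ k.factorial * B ^ k := by
  rw [Matrix.det_apply]
  refine (len_sum _ _).trans ?_
  have : ∀ s ∈ (Finset.univ : Finset (Equiv.Perm (Fin k))), len (Equiv.Perm.sign s • ∏ i, M (s i) i) ≤ B ^ k := by
    intro s _
    have h1 : len (Equiv.Perm.sign s • ∏ i, M (s i) i) = len (∏ i, M (s i) i) := by
      rcases Int.units_eq_one_or (Equiv.Perm.sign s) with h | h <;> simp [h, len_neg]
    rw [h1]
    refine (len_prod _ _).trans ?_
    calc _ ≤ ∏ i : Fin k, B := Finset.prod_le_prod (fun i _ => len_nonneg _) (fun i _ => hB _ _)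
      _ = B ^ k := by simp
  refine (Finset.sum_le_card_nsmul _ _ _ this).trans ?_
  simp [Fintype.card_perm]

end

lemma mch_le {n : ℕ} (S I : Fin n →₀ ℕ) (r : Fin n → ℕ) (h : ∀ i, S i ≤ r i) :
    mch S I ≤ 2 ^ (∑ i, r i) := by
  unfold mch
  rw [← Finset.prod_pow_eq_pow_sum]
  refine Finset.prod_le_prod' fun i _ => ?_
  exact (Nat.choose_le_two_pow _ _).trans (Nat.pow_le_pow_right (by norm_num) (h i))

lemma len_hd {n : ℕ} (I : Fin n →₀ ℕ) (P : MvPolynomial (Fin n) ℝ) (r : Fin n → ℕ)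
    (h : ∀ i, degreeOf i P ≤ r i) : len (hd I P) ≤ 2 ^ (∑ i, r i) * len P := by
  unfold hd
  refine (len_sum _ _).trans ?_
  unfold len
  rw [Finset.mul_sum]
  refine Finset.sum_le_sum fun S hS => ?_
  have := len_monomial (S - I) ((mch S I : ℝ) * coeff S P)
  unfold len at this
  rw [this, abs_mul]
  gcongr
  rw [abs_of_nonneg (by positivity)]
  exact_mod_cast mch_le S I r (fun i => (degreeOf_le_iff.1 (h i)) S hS)

lemma degreeOf_hd {n : ℕ} {R : Type*} [CommRing R] (I : Fin n →₀ ℕ) (P : MvPolynomial (Fin n) R) (i : Fin n) :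
    degreeOf i (hd I P) ≤ degreeOf i P := by
  rw [degreeOf_le_iff]
  intro J hJ
  rw [mem_support_iff, coeff_hd] at hJ
  have : coeff (J + I) P ≠ 0 := right_ne_zero_of_mul hJ
  have := (degreeOf_le_iff.1 (le_refl (degreeOf i P))) (J + I) (mem_support_iff.2 this)
  rw [Finsupp.add_apply] at this
  omega

lemma len_tr {n : ℕ} (β : Fin n → ℝ) (P : MvPolynomial (Fin n) ℝ) (r : Fin n → ℕ)
    (h : ∀ i, degreeOf i P ≤ r i) (hβ : ∀ i, |β i| ≤ 3) : len (tr β P) ≤ 4 ^ (∑ i, r i) * len P := by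
  have e : tr β P = ∑ S ∈ P.support, C (coeff S P) * ∏ i, (X i + C (β i)) ^ S i := by
    conv_lhs => rw [P.as_sum, map_sum]
    refine Finset.sum_congr rfl fun S _ => ?_
    rw [tr, aeval_monomial, Finsupp.prod_fintype _ _ (by simp)]; rfl
  rw [e]
  refine (len_sum _ _).trans ?_
  unfold len
  rw [Finset.mul_sum]
  refine Finset.sum_le_sum fun S hS => ?_
  change len _ ≤ _
  refine (len_mul _ _).trans ?_
  rw [len_C, mul_comm]
  gcongr
  refine (len_prod _ _).trans ?_
  rw [← Finset.prod_pow_eq_pow_sum]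
  refine Finset.prod_le_prod (fun i _ => len_nonneg _) fun i _ => ?_
  refine (len_pow _ _).trans ?_
  have : len (X i + C (β i) : MvPolynomial (Fin n) ℝ) ≤ 4 := by
    refine (len_add _ _).trans ?_
    rw [len_X, len_C]; linarith [hβ i]
  calc _ ≤ (4:ℝ) ^ S i := pow_le_pow_left₀ (len_nonneg _) this _
    _ ≤ 4 ^ r i := pow_le_pow_right₀ (by norm_num) ((degreeOf_le_iff.1 (h i)) S hS)

/-- weighted order lower bound -/
def Ige {n : ℕ} (w : Fin n → ℝ) (P : MvPolynomial (Fin n) ℝ) (θ : ℝ) : Prop :=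
  ∀ K, coeff K P ≠ 0 → θ ≤ ∑ h, w h * K h

lemma Ige_mul {n : ℕ} {w : Fin n → ℝ} {P Q : MvPolynomial (Fin n) ℝ} {a b : ℝ}
    (hP : Ige w P a) (hQ : Ige w Q b) : Ige w (P * Q) (a + b) := by
  classical
  intro K hK
  rw [coeff_mul] at hK
  obtain ⟨⟨x, y⟩, hx, hne⟩ := Finset.exists_ne_zero_of_sum_ne_zero hK
  rw [Finset.HasAntidiagonal.mem_antidiagonal] at hx
  have h1 := hP x (left_ne_zero_of_mul hne)
  have h2 := hQ y (right_ne_zero_of_mul hne)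
  simp only at hx
  rw [← hx]
  simp only [Finsupp.add_apply, Nat.cast_add, mul_add, Finset.sum_add_distrib]
  linarith

lemma Ige_prod {n : ℕ} {ι : Type*} {w : Fin n → ℝ} (s : Finset ι) (P : ι → MvPolynomial (Fin n) ℝ) (a : ι → ℝ)
    (h : ∀ i ∈ s, Ige w (P i) (a i)) : Ige w (∏ i ∈ s, P i) (∑ i ∈ s, a i) := by
  classical
  induction s using Finset.induction_on with
  | empty =>
    intro K hK
    rw [Finset.prod_empty, coeff_one] at hK
    have : K = 0 := by by_contra hc; exact hK (by simp [Ne.symm hc])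
    simp [this]
  | insert i s hi ih =>
    rw [Finset.prod_insert hi, Finset.sum_insert hi]
    exact Ige_mul (h i (by simp)) (ih fun j hj => h j (by simp [hj]))

lemma Ige_sum {n : ℕ} {ι : Type*} {w : Fin n → ℝ} (s : Finset ι) (P : ι → MvPolynomial (Fin n) ℝ) (a : ℝ)
    (h : ∀ i ∈ s, Ige w (P i) a) : Ige w (∑ i ∈ s, P i) a := by
  intro K hK
  rw [coeff_sum] at hK
  obtain ⟨i, hi, hne⟩ := Finset.exists_ne_zero_of_sum_ne_zero hK
  exact h i hi K hne

lemma Ige_det {n k : ℕ} {w : Fin n → ℝ} (M : Matrix (Fin k) (Fin k) (MvPolynomial (Fin n) ℝ)) (a : Fin k → ℝ)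
    (h : ∀ i j, Ige w (M i j) (a j)) : Ige w M.det (∑ j, a j) := by
  rw [Matrix.det_apply]
  apply Ige_sum
  intro s _
  have := Ige_prod Finset.univ (fun i => M (s i) i) a (fun i _ => h _ _)
  intro K hK
  apply this K
  intro h0
  apply hK
  rcases Int.units_eq_one_or (Equiv.Perm.sign s) with h | h <;> simp [h, h0]

end WN
namespace WN
open MvPolynomial

lemma coeff_X_mul_pderiv {n : ℕ} (h : Fin n) (g : MvPolynomial (Fin n) ℝ) (S : Fin n →₀ ℕ) :
    coeff S (X h * pderiv h g) = S h * coeff S g := by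
  classical
  induction g using MvPolynomial.induction_on' with
  | add p q hp hq => rw [map_add, mul_add, coeff_add, hp, hq, coeff_add, mul_add]
  | monomial T c =>
    rw [X_mul_pderiv_monomial, coeff_smul, coeff_monomial, nsmul_eq_mul]
    split_ifs with hh
    · rw [hh]
    · simp

lemma hconst_mv {n : ℕ} (f g : MvPolynomial (Fin n) ℝ) (hf : f ≠ 0)
    (H : ∀ h, f * pderiv h g = g * pderiv h f) : ∃ a : ℝ, g = a • f := by
  classical
  let m : MonomialOrder (Fin n) := MonomialOrder.lex
  have key : ∀ g : MvPolynomial (Fin n) ℝ, g ≠ 0 → (∀ h, f * pderiv h g = g * pderiv h f) →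
      m.degree g = m.degree f := by
    intro g hg H
    have aux : ∀ (h : Fin n) (u v : MvPolynomial (Fin n) ℝ),
        coeff (m.degree u + m.degree v) (u * (X h * pderiv h v)) =
          m.leadingCoeff u * (m.degree v h * m.leadingCoeff v) := by
      intro h u v
      rw [MonomialOrder.coeff_mul_of_add_of_degree_le le_rfl, coeff_X_mul_pderiv]
      · rfl
      · rw [MonomialOrder.degree_le_iff]
        intro c hc
        rw [mem_support_iff, coeff_X_mul_pderiv] at hc
        exact m.le_degree (mem_support_iff.2 (right_ne_zero_of_mul hc))
    ext h
    have e1 := aux h f g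
    have e2 := aux h g f
    have e3 : f * (X h * pderiv h g) = g * (X h * pderiv h f) := by
      rw [mul_left_comm, H h, mul_left_comm]
    rw [e3, add_comm, e2] at e1
    have hf' : m.leadingCoeff f ≠ 0 := m.leadingCoeff_ne_zero_iff.2 hf
    have hg' : m.leadingCoeff g ≠ 0 := m.leadingCoeff_ne_zero_iff.2 hg
    have : (m.degree f h : ℝ) = m.degree g h := by
      have : (m.leadingCoeff f * m.leadingCoeff g) * ((m.degree f h : ℝ) - m.degree g h) = 0 := by
        linear_combination e1
      rcases mul_eq_zero.1 this with h0 | h0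
      · exact absurd h0 (mul_ne_zero hf' hg')
      · linarith
    exact_mod_cast this.symm
  by_contra hne
  push Not at hne
  have hf' : m.leadingCoeff f ≠ 0 := m.leadingCoeff_ne_zero_iff.2 hf
  set a : ℝ := coeff (m.degree f) g / m.leadingCoeff f with ha
  have hg1 : g - a • f ≠ 0 := sub_ne_zero.2 (hne a)
  have hd := key (g - a • f) hg1 (by
    intro h
    rw [map_sub, Derivation.map_smul, mul_sub, sub_mul, H h]
    simp [mul_smul_comm, smul_mul_assoc])
  have h1 : m.leadingCoeff (g - a • f) ≠ 0 := m.leadingCoeff_ne_zero_iff.2 hg1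
  apply h1
  unfold MonomialOrder.leadingCoeff
  rw [hd, coeff_sub, coeff_smul, smul_eq_mul, ha]
  unfold MonomialOrder.leadingCoeff at hf' ⊢
  field_simp
  ring

lemma hconst_poly (f g : Polynomial ℝ) (hf : f ≠ 0)
    (H : f * Polynomial.derivative g = g * Polynomial.derivative f) : ∃ a : ℝ, g = a • f := by
  have key : ∀ g : Polynomial ℝ, g ≠ 0 → (f * Polynomial.derivative g = g * Polynomial.derivative f) →
      g.natDegree = f.natDegree := by
    intro g hg H
    have aux : ∀ u v : Polynomial ℝ,
        (u * (Polynomial.X * Polynomial.derivative v)).coeff (u.natDegree + v.natDegree) =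
          u.leadingCoeff * (v.natDegree * v.leadingCoeff) := by
      intro u v
      have hc : ∀ k, (Polynomial.X * Polynomial.derivative v).coeff k = k * v.coeff k := by
        intro k
        cases k with
        | zero => simp
        | succ k => rw [Polynomial.coeff_X_mul, Polynomial.coeff_derivative]; push_cast; ring
      rw [Polynomial.coeff_mul_add_eq_of_natDegree_le le_rfl, hc]
      · rfl
      · rw [Polynomial.natDegree_le_iff_coeff_eq_zero]
        intro N hN
        rw [hc, Polynomial.coeff_eq_zero_of_natDegree_lt hN, mul_zero]
    have e1 := aux f g
    have e2 := aux g f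
    have e3 : f * (Polynomial.X * Polynomial.derivative g) = g * (Polynomial.X * Polynomial.derivative f) := by
      rw [mul_left_comm, H, mul_left_comm]
    rw [e3, add_comm, e2] at e1
    have hf' : f.leadingCoeff ≠ 0 := Polynomial.leadingCoeff_ne_zero.2 hf
    have hg' : g.leadingCoeff ≠ 0 := Polynomial.leadingCoeff_ne_zero.2 hg
    have : (f.natDegree : ℝ) = g.natDegree := by
      have : (f.leadingCoeff * g.leadingCoeff) * ((f.natDegree : ℝ) - g.natDegree) = 0 := by
        linear_combination e1
      rcases mul_eq_zero.1 this with h0 | h0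
      · exact absurd h0 (mul_ne_zero hf' hg')
      · linarith
    exact_mod_cast this.symm
  by_contra hne
  push Not at hne
  have hf' : f.leadingCoeff ≠ 0 := Polynomial.leadingCoeff_ne_zero.2 hf
  set a : ℝ := g.coeff f.natDegree / f.leadingCoeff with ha
  have hg1 : g - a • f ≠ 0 := sub_ne_zero.2 (hne a)
  have hd := key (g - a • f) hg1 (by
    rw [Polynomial.derivative_sub, Polynomial.derivative_smul, mul_sub, sub_mul, H]
    simp [mul_smul_comm, smul_mul_assoc])
  have h1 : (g - a • f).leadingCoeff ≠ 0 := Polynomial.leadingCoeff_ne_zero.2 hg1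
  apply h1
  unfold Polynomial.leadingCoeff
  rw [hd, Polynomial.coeff_sub, Polynomial.coeff_smul, smul_eq_mul, ha]
  unfold Polynomial.leadingCoeff at hf' ⊢
  field_simp
  ring

lemma wronsk {R ι H Λ : Type*} [CommRing R] [IsDomain R] [Algebra ℝ R]
    (D : H → Derivation ℝ R R)
    (hconst : ∀ f g : R, f ≠ 0 → (∀ h, f * D h g = g * D h f) → ∃ a : ℝ, g = a • f)
    (Δ : Λ → R → R) (lev : Λ → ℕ) (l0 : Λ) (hl0 : lev l0 = 0) (hΔ0 : ∀ f, Δ l0 f = f)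
    (hstep : ∀ h l, ∃ l' : Λ, ∃ u : R, lev l' ≤ lev l + 1 ∧ ∀ f, D h (Δ l f) = u * Δ l' f)
    (φ : ι → R) : ∀ (k : ℕ) (s : Finset ι) (c : ι → R), s.card = k → LinearIndepOn ℝ φ (s : Set ι) →
      (∀ l, lev l < s.card → ∑ i ∈ s, c i * Δ l (φ i) = 0) → ∀ i ∈ s, c i = 0 := by
  classical
  intro k
  induction k with
  | zero =>
    intro s c hs _ _ i hi
    rw [Finset.card_eq_zero] at hs
    simp [hs] at hi
  | succ k ih =>
    intro s c hs hli hsum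
    by_contra hne
    push Not at hne
    obtain ⟨i0, hi0, hc0⟩ := hne
    have hprop : ∀ i ∈ s, ∀ h, c i0 * D h (c i) - c i * D h (c i0) = 0 := by
      intro i hi h
      by_cases hii : i = i0
      · rw [hii]; ring
      refine ih (s.erase i0) (fun i => c i0 * D h (c i) - c i * D h (c i0)) ?_ ?_ ?_ i (Finset.mem_erase.2 ⟨hii, hi⟩)
      · rw [Finset.card_erase_of_mem hi0, hs]; rfl
      · exact hli.mono (by simp)
      · intro l hl
        rw [Finset.card_erase_of_mem hi0, hs] at hl
        obtain ⟨l', u, hl', hu⟩ := hstep h l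
        have e0 := hsum l (by omega)
        have e1 := hsum l' (by omega)
        have e2 := congrArg (D h) e0
        rw [map_sum, map_zero] at e2
        have e3 : ∀ i, D h (c i * Δ l (φ i)) = u * (c i * Δ l' (φ i)) + D h (c i) * Δ l (φ i) := by
          intro i
          rw [Derivation.leibniz, smul_eq_mul, smul_eq_mul, hu]; ring
        simp_rw [e3] at e2
        rw [Finset.sum_add_distrib, ← Finset.mul_sum, e1, mul_zero, zero_add] at e2
        have e4 : ∑ i ∈ s, (c i0 * D h (c i) - c i * D h (c i0)) * Δ l (φ i) = 0 := by
          calc _ = c i0 * ∑ i ∈ s, D h (c i) * Δ l (φ i) - D h (c i0) * ∑ i ∈ s, c i * Δ l (φ i) := by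
                rw [Finset.mul_sum, Finset.mul_sum, ← Finset.sum_sub_distrib]
                exact Finset.sum_congr rfl fun i _ => by ring
            _ = 0 := by rw [e2, e0]; ring
        rw [← Finset.add_sum_erase s _ hi0] at e4
        simpa using e4
    have hex : ∀ i, ∃ a : ℝ, i ∈ s → c i = a • c i0 := by
      intro i
      by_cases hi : i ∈ s
      · obtain ⟨a, ha⟩ := hconst (c i0) (c i) hc0 (fun h => sub_eq_zero.1 (hprop i hi h))
        exact ⟨a, fun _ => ha⟩
      · exact ⟨0, fun h => absurd h hi⟩
    choose a ha using hex
    have e0 := hsum l0 (by rw [hl0, hs]; omega)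
    simp_rw [hΔ0] at e0
    have e1 : c i0 * ∑ i ∈ s, a i • φ i = 0 := by
      rw [← e0, Finset.mul_sum]
      refine Finset.sum_congr rfl fun i hi => ?_
      rw [ha i hi, mul_smul_comm, smul_mul_assoc]
    have e2 := (mul_eq_zero.1 e1).resolve_left hc0
    have e3 := linearIndepOn_finset_iff.1 hli a e2 i0 hi0
    apply hc0
    rw [ha i0 hi0, e3, zero_smul]

lemma exists_minor {R Λ : Type*} [CommRing R] [IsDomain R] {k : ℕ} (M : Λ → Fin k → R)
    (hM : ∀ c : Fin k → R, (∀ l, ∑ i, c i * M l i = 0) → c = 0) :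
    ∃ f : Fin k → Λ, (Matrix.of fun i j => M (f i) j).det ≠ 0 := by
  classical
  let F := FractionRing R
  let v : Λ → Fin k → F := fun l i => algebraMap R F (M l i)
  have htop : Submodule.span F (Set.range v) = ⊤ := by
    by_contra hne
    obtain ⟨g, hg0, hg⟩ := Submodule.exists_le_ker_of_lt_top _ (lt_top_iff_ne_top.2 hne)
    obtain ⟨b, hb⟩ := IsLocalization.exist_integer_multiples_of_finite (nonZeroDivisors R)
      (fun i : Fin k => g (Pi.single i 1))
    choose c hc using hb
    have hgx : ∀ x : Fin k → F, g x = ∑ i, x i * g (Pi.single i 1) := by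
      intro x
      conv_lhs => rw [← Finset.univ_sum_single x, map_sum]
      refine Finset.sum_congr rfl fun i _ => ?_
      have : (Pi.single i (x i) : Fin k → F) = x i • Pi.single i 1 := by
        rw [← Pi.single_smul]; simp
      rw [this, map_smul, smul_eq_mul]
    have hc0 : c = 0 := by
      apply hM
      intro l
      have h1 : g (v l) = 0 := hg (Submodule.subset_span ⟨l, rfl⟩)
      rw [hgx] at h1
      have h2 : algebraMap R F (∑ i, c i * M l i) = 0 := by
        rw [map_sum]
        simp_rw [map_mul, hc]
        calc _ = (b : R) • ∑ i, v l i * g (Pi.single i 1) := by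
              rw [Finset.smul_sum]
              refine Finset.sum_congr rfl fun i _ => ?_
              rw [smul_mul_assoc, mul_comm]
          _ = 0 := by rw [h1, smul_zero]
      exact (IsFractionRing.injective R F) (by rw [h2, map_zero])
    apply hg0
    ext i
    simp only [LinearMap.comp_apply, LinearMap.zero_comp, LinearMap.zero_apply, LinearMap.coe_single]
    have h3 := hc i
    rw [hc0] at h3
    simp only [Pi.zero_apply, map_zero] at h3
    have h4 : algebraMap R F (b : R) * g (Pi.single i 1) = 0 := by
      rw [← Algebra.smul_def]; exact h3.symm
    rcases mul_eq_zero.1 h4 with h5 | h5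
    · exfalso
      have := (IsFractionRing.injective R F) (h5.trans (map_zero _).symm)
      exact nonZeroDivisors.ne_zero b.2 this
    · exact h5
  obtain ⟨f, hf1, hf2, hf3⟩ := Submodule.exists_fun_fin_finrank_span_eq F (Set.range v)
  have hk : Module.finrank F (Submodule.span F (Set.range v)) = k := by
    rw [htop, finrank_top]; simp
  choose e he using hf1
  refine ⟨fun i => e (finCongr hk.symm i), ?_⟩
  have hli : LinearIndependent F (fun i : Fin k => f (finCongr hk.symm i)) :=
    hf3.comp _ (finCongr hk.symm).injective
  have hu : IsUnit (Matrix.of fun i j => f (finCongr hk.symm i) j) := by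
    rw [← Matrix.linearIndependent_rows_iff_isUnit]
    exact hli
  rw [Matrix.isUnit_iff_isUnit_det] at hu
  intro h0
  have h1 : (Matrix.of fun i j => f (finCongr hk.symm i) j) =
      (algebraMap R F).mapMatrix (Matrix.of fun i j => M (e (finCongr hk.symm i)) j) := by
    ext i j
    simp only [Matrix.of_apply, RingHom.mapMatrix_apply, Matrix.map_apply]
    rw [← he]
  rw [h1, ← RingHom.map_det, h0, map_zero] at hu
  exact not_isUnit_zero hu

lemma mv_wronsk {n k : ℕ} (φ : Fin k → MvPolynomial (Fin n) ℝ) (hφ : LinearIndependent ℝ φ) :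
    ∃ I : Fin k → (Fin n →₀ ℕ), (∀ i, ∑ h, I i h < k) ∧
      (Matrix.of fun i l => hd (I i) (φ l)).det ≠ 0 := by
  classical
  obtain ⟨f, hf⟩ := exists_minor (Λ := {I : Fin n →₀ ℕ // ∑ h, I h < k}) (fun I l => hd I.1 (φ l)) (by
    intro c hc
    have := wronsk (R := MvPolynomial (Fin n) ℝ) (H := Fin n) (Λ := Fin n →₀ ℕ) (fun h => pderiv h)
      hconst_mv hd (fun I => ∑ h, I h) 0 (by simp) hd_zero (by
        intro h l
        refine ⟨l + Finsupp.single h 1, C ((l h + 1 : ℕ) : ℝ), ?_, fun f => pderiv_hd h l f⟩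
        simp [Finset.sum_add_distrib, Finsupp.single_apply]) φ k Finset.univ c (by simp)
        (by simpa using hφ) (by
          intro l hl
          exact hc ⟨l, by simpa using hl⟩)
    ext1 i
    exact this i (Finset.mem_univ i))
  exact ⟨fun i => (f i).1, fun i => (f i).2, hf⟩

lemma poly_wronsk {k : ℕ} (ψ : Fin k → Polynomial ℝ) (hψ : LinearIndependent ℝ ψ) :
    (Matrix.of fun (j : Fin k) l => Polynomial.hasseDeriv (j : ℕ) (ψ l)).det ≠ 0 := by
  classical
  intro h0
  rw [← Matrix.exists_mulVec_eq_zero_iff] at h0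
  obtain ⟨c, hc0, hc⟩ := h0
  apply hc0
  have := wronsk (R := Polynomial ℝ) (H := Unit) (Λ := ℕ) (fun h => Polynomial.derivative')
      (fun f g hf H => hconst_poly f g hf (H ())) (fun j f => Polynomial.hasseDeriv j f) (fun j => j) 0 rfl
      (fun f => Polynomial.hasseDeriv_zero' f) (by
        intro h l
        refine ⟨l + 1, ((l + 1 : ℕ) : Polynomial ℝ), le_rfl, fun f => ?_⟩
        have := LinearMap.congr_fun (Polynomial.hasseDeriv_comp (R := ℝ) 1 l) f
        simp only [LinearMap.comp_apply, Polynomial.hasseDeriv_one', LinearMap.smul_apply] at this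
        change Polynomial.derivative _ = _
        rw [this, add_comm 1 l, Nat.choose_one_right, nsmul_eq_mul]) ψ k Finset.univ c (by simp)
        (by simpa using hψ) (by
          intro l hl
          have := congrFun hc ⟨l, by simpa using hl⟩
          simp only [Matrix.mulVec, dotProduct, Matrix.of_apply, Pi.zero_apply] at this
          rw [← this]
          exact Finset.sum_congr rfl fun i _ => mul_comm _ _)
  ext1 i
  exact this i (Finset.mem_univ i)

end WN
namespace WN
open MvPolynomial

/-- product of polynomials in separate variables -/
noncomputable def tens {n : ℕ} (φ : MvPolynomial (Fin n) ℝ) (ψ : Polynomial ℝ) : MvPolynomial (Fin (n+1)) ℝ :=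
  rename Fin.succ φ * Polynomial.aeval (X 0) ψ

lemma finSuccEquiv_tens {n : ℕ} (φ : MvPolynomial (Fin n) ℝ) (ψ : Polynomial ℝ) :
    finSuccEquiv ℝ n (tens φ ψ) = Polynomial.C φ * ψ.map C := by
  unfold tens
  rw [map_mul]
  congr 1
  · induction φ using MvPolynomial.induction_on with
    | C a => simp [finSuccEquiv_apply]
    | add p q hp hq => simp [hp, hq]
    | mul_X p i hp => simp [hp, finSuccEquiv_X_succ]
  · induction ψ using Polynomial.induction_on' with
    | add p q hp hq => simp [hp, hq]
    | monomial k a => simp [finSuccEquiv_X_zero, Polynomial.aeval_monomial, finSuccEquiv_apply, ← Polynomial.C_mul_X_pow_eq_monomial]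

lemma coeff_tens {n : ℕ} (φ : MvPolynomial (Fin n) ℝ) (ψ : Polynomial ℝ) (j : ℕ) (J : Fin n →₀ ℕ) :
    coeff (Finsupp.cons j J) (tens φ ψ) = coeff J φ * ψ.coeff j := by
  rw [← finSuccEquiv_coeff_coeff, finSuccEquiv_tens, Polynomial.coeff_C_mul, Polynomial.coeff_map,
    mul_comm, coeff_C_mul, mul_comm]

lemma eval_tens {n : ℕ} (φ : MvPolynomial (Fin n) ℝ) (ψ : Polynomial ℝ) (β : Fin (n+1) → ℝ) :
    eval β (tens φ ψ) = eval (fun i => β i.succ) φ * ψ.eval (β 0) := by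
  unfold tens
  rw [map_mul, eval_rename]
  congr 1
  induction ψ using Polynomial.induction_on' with
  | add p q hp hq => simp [hp, hq]
  | monomial k a => simp [Polynomial.aeval_monomial]

lemma cons_add_cons {n : ℕ} (a b : ℕ) (A B : Fin n →₀ ℕ) :
    Finsupp.cons a A + Finsupp.cons b B = Finsupp.cons (a + b) (A + B) := by
  ext i
  refine Fin.cases ?_ (fun i => ?_) i <;> simp

lemma ext_cons {n : ℕ} {R : Type*} [CommRing R] {P Q : MvPolynomial (Fin (n+1)) R}
    (h : ∀ j J, coeff (Finsupp.cons j J) P = coeff (Finsupp.cons j J) Q) : P = Q := by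
  ext K
  rw [← Finsupp.cons_tail K]; exact h _ _

lemma hd_tens {n : ℕ} (φ : MvPolynomial (Fin n) ℝ) (ψ : Polynomial ℝ) (j : ℕ) (J : Fin n →₀ ℕ) :
    hd (Finsupp.cons j J) (tens φ ψ) = tens (hd J φ) (Polynomial.hasseDeriv j ψ) := by
  apply ext_cons
  intro k K
  rw [coeff_hd, coeff_tens, cons_add_cons, coeff_tens, coeff_hd, Polynomial.hasseDeriv_coeff]
  have : mch (Finsupp.cons (k + j) (K + J)) (Finsupp.cons j J) = (k+j).choose j * mch (K + J) J := by
    unfold mch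
    rw [Fin.prod_univ_succ]
    simp
  rw [this]; push_cast; ring

lemma coeff_tr_tens {n : ℕ} (φ : MvPolynomial (Fin n) ℝ) (ψ : Polynomial ℝ) (β : Fin (n+1) → ℝ)
    (j : ℕ) (J : Fin n →₀ ℕ) : coeff (Finsupp.cons j J) (tr β (tens φ ψ)) =
      coeff J (tr (fun i => β i.succ) φ) * (Polynomial.taylor (β 0) ψ).coeff j := by
  rw [coeff_tr, hd_tens, eval_tens, coeff_tr, Polynomial.taylor_coeff]

lemma rank_decomp {n r : ℕ} (P : MvPolynomial (Fin (n+1)) ℝ) (hP : P ≠ 0) (hr : degreeOf 0 P ≤ r) :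
    ∃ (k : ℕ) (φ : Fin k → MvPolynomial (Fin n) ℝ) (ψ : Fin k → Polynomial ℝ), 0 < k ∧ k ≤ r + 1 ∧
      LinearIndependent ℝ φ ∧ LinearIndependent ℝ ψ ∧ P = ∑ l, tens (φ l) (ψ l) := by
  classical
  set Q := finSuccEquiv ℝ n P with hQ
  let g : Fin (r+1) → MvPolynomial (Fin n) ℝ := fun j => Q.coeff j
  let V := Submodule.span ℝ (Set.range g)
  have hmem : ∀ j, g j ∈ V := fun j => Submodule.subset_span ⟨j, rfl⟩
  haveI : Module.Finite ℝ V := Module.Finite.span_of_finite ℝ (Set.finite_range g)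
  let b := Module.finBasis ℝ V
  let k := Module.finrank ℝ V
  let φ : Fin k → MvPolynomial (Fin n) ℝ := fun l => (b l : MvPolynomial (Fin n) ℝ)
  let ψ : Fin k → Polynomial ℝ := fun l => ∑ j : Fin (r+1), Polynomial.monomial j (b.repr ⟨g j, hmem j⟩ l)
  have hψc : ∀ l (j : Fin (r+1)), (ψ l).coeff j = b.repr ⟨g j, hmem j⟩ l := by
    intro l j
    simp only [ψ, Polynomial.finset_sum_coeff, Polynomial.coeff_monomial]
    rw [Finset.sum_eq_single j]
    · simp
    · intro i _ hij
      rw [if_neg]; intro h; exact hij (Fin.ext h)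
    · simp
  have hψ0 : ∀ l (j : ℕ), r < j → (ψ l).coeff j = 0 := by
    intro l j hj
    simp only [ψ, Polynomial.finset_sum_coeff, Polynomial.coeff_monomial]
    refine Finset.sum_eq_zero fun i _ => ?_
    rw [if_neg]; have := i.2; omega
  have hsum : P = ∑ l, tens (φ l) (ψ l) := by
    apply ext_cons
    intro j J
    rw [coeff_sum]
    simp_rw [coeff_tens]
    by_cases hj : j < r + 1
    · have h1 := b.sum_repr ⟨g ⟨j, hj⟩, hmem _⟩
      have h2 := congrArg (fun v : V => coeff J (v : MvPolynomial (Fin n) ℝ)) h1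
      simp only [Submodule.coe_sum, Submodule.coe_smul, coeff_sum, coeff_smul, smul_eq_mul] at h2
      rw [← finSuccEquiv_coeff_coeff]
      change coeff J (g ⟨j, hj⟩) = _
      rw [← h2]
      refine Finset.sum_congr rfl fun l _ => ?_
      rw [hψc l ⟨j, hj⟩, mul_comm]
    · rw [Finset.sum_eq_zero (fun l _ => by rw [hψ0 l j (by omega), mul_zero])]
      by_contra hne
      have := (degreeOf_le_iff.1 hr) _ (mem_support_iff.2 hne)
      simp at this
      omega
  refine ⟨k, φ, ψ, ?_, ?_, ?_, ?_, hsum⟩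
  · by_contra h0
    apply hP
    have hk0 : k = 0 := by omega
    rw [hsum]
    apply Finset.sum_eq_zero
    intro l _
    have := l.2
    omega
  · have := finrank_range_le_card (R := ℝ) g
    simpa [Set.finrank] using this
  · exact b.linearIndependent.map' V.subtype (Submodule.ker_subtype V)
  · rw [Fintype.linearIndependent_iff]
    intro c hc
    let L : V →ₗ[ℝ] ℝ := ∑ l, c l • b.coord l
    have hL : ∀ v : V, L v = ∑ l, c l * b.repr v l := by
      intro v; simp [L]
    have hL0 : ∀ v : MvPolynomial (Fin n) ℝ, ∀ hv : v ∈ V, L ⟨v, hv⟩ = 0 := by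
      intro v hv
      induction hv using Submodule.span_induction with
      | mem x hx =>
        obtain ⟨j, rfl⟩ := hx
        rw [hL]
        have := congrArg (fun p : Polynomial ℝ => p.coeff j) hc
        simp only [Polynomial.finset_sum_coeff, Polynomial.coeff_smul, smul_eq_mul, Polynomial.coeff_zero] at this
        rw [← this]
        exact Finset.sum_congr rfl fun l _ => by rw [hψc]
      | zero => exact map_zero L
      | add x y hx hy h1 h2 =>
        have := map_add L ⟨x, hx⟩ ⟨y, hy⟩
        rw [h1, h2, add_zero] at this
        exact this
      | smul a x hx h1 =>
        have := map_smul L a ⟨x, hx⟩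
        rw [h1, smul_zero] at this
        exact this
    intro l
    have h1 := hL (b l)
    rw [hL0 (b l).1 (b l).2] at h1
    rw [Finset.sum_eq_single l] at h1
    · simpa using h1.symm
    · intro i _ hi; simp [Finsupp.single_eq_of_ne hi]
    · simp

lemma univ_lemma (U : Polynomial ℤ) (hU : U ≠ 0) (p q : ℕ) (hq : 0 < q) (hpq : Nat.Coprime p q) :
    ∃ l : ℕ, (Polynomial.taylor ((p:ℝ)/q) (U.map (Int.castRingHom ℝ))).coeff l ≠ 0 ∧
      (q:ℝ) ^ l ≤ |(U.leadingCoeff : ℝ)| := by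
  have hq0 : (q:ℚ) ≠ 0 := by exact_mod_cast hq.ne'
  have hUQ : U.map (Int.castRingHom ℚ) ≠ 0 :=
    (Polynomial.map_ne_zero_iff (Int.cast_injective (α := ℚ))).2 hU
  obtain ⟨G, hG, hG2⟩ := Polynomial.exists_eq_pow_rootMultiplicity_mul_and_not_dvd _ hUQ ((p:ℚ)/q)
  set l := Polynomial.rootMultiplicity ((p:ℚ)/q) (U.map (Int.castRingHom ℚ)) with hl
  refine ⟨l, ?_, ?_⟩
  · have h1 : U.map (Int.castRingHom ℝ) = (Polynomial.X - Polynomial.C ((p:ℝ)/q)) ^ l * G.map (algebraMap ℚ ℝ) := by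
      have := congrArg (Polynomial.map (algebraMap ℚ ℝ)) hG
      rw [Polynomial.map_map] at this
      have e : (algebraMap ℚ ℝ).comp (Int.castRingHom ℚ) = Int.castRingHom ℝ := RingHom.ext_int _ _
      rw [e] at this
      rw [this]
      simp
    rw [h1, Polynomial.taylor_mul, Polynomial.taylor_pow]
    have h2 : Polynomial.taylor ((p:ℝ)/q) (Polynomial.X - Polynomial.C ((p:ℝ)/q)) = Polynomial.X := by
      simp
    rw [h2]
    have h3 := Polynomial.coeff_X_pow_mul (Polynomial.taylor ((p:ℝ)/q) (G.map (algebraMap ℚ ℝ))) l 0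
    rw [zero_add] at h3
    rw [h3, Polynomial.taylor_coeff_zero]
    intro h0
    apply hG2
    rw [Polynomial.dvd_iff_isRoot, Polynomial.IsRoot.def]
    have h4 : Polynomial.eval ((algebraMap ℚ ℝ) ((p:ℚ)/q)) (G.map (algebraMap ℚ ℝ)) = 0 := by
      simpa using h0
    rw [Polynomial.eval_map_algebraMap, Polynomial.aeval_algebraMap_apply] at h4
    simpa using h4
  · set B : Polynomial ℤ := Polynomial.C (q:ℤ) * Polynomial.X - Polynomial.C (p:ℤ) with hB
    have hBp : B.IsPrimitive := by
      intro a ha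
      rw [Polynomial.C_dvd_iff_dvd_coeff] at ha
      have h0 := ha 0
      have h1 := ha 1
      simp [hB] at h0 h1
      have : IsCoprime (p:ℤ) (q:ℤ) := Nat.isCoprime_iff_coprime.2 hpq
      exact this.isUnit_of_dvd' h0 h1
    have hBlp : (B ^ l).IsPrimitive := by
      generalize l = l
      induction l with
      | zero => rw [pow_zero]; exact Polynomial.isPrimitive_one
      | succ l ih => rw [pow_succ]; exact ih.mul hBp
    have hdvd : B ^ l ∣ U := by
      rw [Polynomial.IsPrimitive.Int.dvd_iff_map_cast_dvd_map_cast _ _ hBlp, hG]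
      have e : Polynomial.map (Int.castRingHom ℚ) (B ^ l) = Polynomial.C ((q:ℚ)^l) * (Polynomial.X - Polynomial.C ((p:ℚ)/q)) ^ l := by
        rw [Polynomial.map_pow, hB, map_pow, ← mul_pow]
        congr 1
        rw [mul_sub, ← Polynomial.C_mul, mul_div_cancel₀ _ hq0]
        simp
      rw [e]
      have hu : IsUnit (Polynomial.C ((q:ℚ)^l)) := Polynomial.isUnit_C.2 (by
        rw [isUnit_iff_ne_zero]; exact pow_ne_zero _ hq0)
      rw [hu.mul_left_dvd]
      exact dvd_mul_right _ _
    obtain ⟨G', hG'⟩ := hdvd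
    have hBlc : B.leadingCoeff = q := by
      have := Polynomial.leadingCoeff_linear (a := (q:ℤ)) (b := -(p:ℤ)) (by exact_mod_cast hq.ne')
      rw [hB, sub_eq_add_neg, ← Polynomial.C_neg]; exact this
    have hlc : U.leadingCoeff = q ^ l * G'.leadingCoeff := by
      rw [hG', Polynomial.leadingCoeff_mul, Polynomial.leadingCoeff_pow, hBlc]
    have hG0 : G'.leadingCoeff ≠ 0 := by
      rw [Polynomial.leadingCoeff_ne_zero]; rintro rfl; simp at hG'; exact hU hG'
    rw [hlc]
    push_cast
    rw [abs_mul, abs_of_nonneg (by positivity)]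
    have : (1:ℝ) ≤ |(G'.leadingCoeff : ℝ)| := by exact_mod_cast Int.one_le_abs hG0
    nlinarith [show (0:ℝ) ≤ (q:ℝ)^l by positivity]

lemma sum_max_bound (k r : ℕ) (τ : ℝ) (hk : 0 < k) (hr : 0 < r) (hkr : k ≤ r + 1) (h0 : 0 < τ) (h1 : τ ≤ 1) :
    k * τ ^ 2 / 8 ≤ ∑ j : Fin k, max 0 (τ - (j:ℕ) / (r:ℝ)) := by
  rw [Fin.sum_univ_eq_sum_range (fun j => max 0 (τ - (j:ℕ) / (r:ℝ))) k]
  have hk' : (0:ℝ) < k := by exact_mod_cast hk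
  have hr' : (0:ℝ) < r := by exact_mod_cast hr
  set T := ⌈(k:ℝ) * τ / 4⌉₊ with hT
  have hTk : T ≤ k := by
    rw [hT, Nat.ceil_le]; nlinarith
  have h2 : ∑ j ∈ Finset.range T, max 0 (τ - (j:ℕ) / (r:ℝ)) ≤ ∑ j ∈ Finset.range k, max 0 (τ - (j:ℕ) / (r:ℝ)) :=
    Finset.sum_le_sum_of_subset_of_nonneg (Finset.range_mono hTk) (fun _ _ _ => le_max_left _ _)
  refine le_trans ?_ h2
  have h3 : ∀ j ∈ Finset.range T, τ / 2 ≤ max 0 (τ - (j:ℕ) / (r:ℝ)) := by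
    intro j hj
    rw [Finset.mem_range, hT, Nat.lt_ceil] at hj
    refine le_trans ?_ (le_max_right _ _)
    have : (j:ℝ) / r ≤ τ / 2 := by
      rw [div_le_iff₀ hr']
      have : (k:ℝ) ≤ r + 1 := by exact_mod_cast hkr
      have : (1:ℝ) ≤ r := by exact_mod_cast hr
      nlinarith
    linarith
  have h4 := Finset.card_nsmul_le_sum _ _ _ h3
  rw [Finset.card_range, nsmul_eq_mul] at h4
  refine le_trans ?_ h4
  have := Nat.le_ceil ((k:ℝ) * τ / 4)
  rw [← hT] at this
  nlinarith

lemma degreeOf_det {n k d : ℕ} {R : Type*} [CommRing R] (h : Fin n) (M : Matrix (Fin k) (Fin k) (MvPolynomial (Fin n) R))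
    (hM : ∀ i j, degreeOf h (M i j) ≤ d) : degreeOf h M.det ≤ k * d := by
  rw [Matrix.det_apply]
  refine (degreeOf_sum_le _ _ _).trans ?_
  refine Finset.sup_le fun s _ => ?_
  have h1 : degreeOf h (Equiv.Perm.sign s • ∏ i, M (s i) i) = degreeOf h (∏ i, M (s i) i) := by
    rcases Int.units_eq_one_or (Equiv.Perm.sign s) with hs | hs <;> simp [hs, degreeOf_neg]
  rw [h1]
  refine (degreeOf_prod_le _ _ _).trans ?_
  refine (Finset.sum_le_sum fun i _ => hM (s i) i).trans ?_
  simp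

lemma abs_coeff_le_len {σ : Type*} (P : MvPolynomial σ ℝ) (S : σ →₀ ℕ) : |coeff S P| ≤ len P := by
  by_cases h : S ∈ P.support
  · exact Finset.single_le_sum (f := fun S => |coeff S P|) (fun _ _ => abs_nonneg _) h
  · rw [notMem_support_iff] at h
    rw [h, abs_zero]; exact len_nonneg P

lemma len_slice {n : ℕ} (W : MvPolynomial (Fin (n+1)) ℝ) (V : MvPolynomial (Fin n) ℝ) (j : ℕ)
    (h : ∀ J, coeff J V = coeff (Finsupp.cons j J) W) : len V ≤ len W := by
  classical
  unfold len
  have hinj : Function.Injective (fun J : Fin n →₀ ℕ => (Finsupp.cons j J : Fin (n+1) →₀ ℕ)) := by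
    intro A B hAB
    have := congrArg Finsupp.tail hAB
    simpa using this
  calc _ = ∑ S ∈ V.support.map ⟨_, hinj⟩, |coeff S W| := by
        rw [Finset.sum_map]; exact Finset.sum_congr rfl fun J _ => by rw [h]; rfl
    _ ≤ _ := by
        apply Finset.sum_le_sum_of_subset_of_nonneg
        · intro S hS
          rw [Finset.mem_map] at hS
          obtain ⟨J, hJ, rfl⟩ := hS
          rw [mem_support_iff, h] at hJ
          rw [mem_support_iff]; exact hJ
        · intros; exact abs_nonneg _

end WN
namespace WN
open MvPolynomial

lemma det_tens {n k : ℕ} (φ : Fin k → MvPolynomial (Fin n) ℝ) (ψ : Fin k → Polynomial ℝ) (I : Fin k → (Fin n →₀ ℕ)) :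
    (Matrix.of fun (i j : Fin k) => hd (Finsupp.cons (j:ℕ) (I i)) (∑ l, tens (φ l) (ψ l))).det =
    tens (Matrix.of fun i l => hd (I i) (φ l)).det (Matrix.of fun (j : Fin k) l => Polynomial.hasseDeriv (j:ℕ) (ψ l)).det := by
  unfold tens
  rw [AlgHom.map_det, AlgHom.map_det]
  conv_rhs => rw [← Matrix.det_transpose ((Polynomial.aeval (X 0)).mapMatrix _), ← Matrix.det_mul]
  congr 1
  ext1 i j
  rw [Matrix.of_apply, Matrix.mul_apply, hd_sum]
  refine Finset.sum_congr rfl fun l _ => ?_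
  have := hd_tens (φ l) (ψ l) (j:ℕ) (I i)
  unfold tens at this
  rw [this]
  rfl

lemma weight_contra {n k : ℕ} (P : MvPolynomial (Fin (n+1)) ℝ) (β : Fin (n+1) → ℝ) (r : Fin (n+1) → ℕ)
    (hr : ∀ h, 0 < r h) (ω ε : ℝ) (hε : 0 < ε) (hε1 : ε ≤ 1) (hω0 : 0 < ω) (hω : ω ≤ ε / 2)
    (hrr : ∀ i j, i < j → (r i : ℝ) ≤ ω * r j) (hk : 0 < k) (hkr : k ≤ r 0 + 1)
    (I : Fin k → (Fin n →₀ ℕ)) (hI : ∀ i, ∑ h, I i h < k)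
    (hP : ∀ K, coeff K (tr β P) ≠ 0 → ε < ∑ h, (K h : ℝ) / r h)
    (K : Fin (n+1) →₀ ℕ)
    (hK : coeff K (tr β (Matrix.of fun (i j : Fin k) => hd (Finsupp.cons (j:ℕ) (I i)) P).det) ≠ 0) :
    k * ε^2 / 32 ≤ ∑ h, (K h : ℝ) / r h := by
  have hr0 : ∀ h, (0:ℝ) < r h := fun h => by exact_mod_cast hr h
  rw [AlgHom.map_det] at hK
  have hent : ∀ i j : Fin k, Ige (fun h => 1 / (r h : ℝ))
      (((tr β).mapMatrix (Matrix.of fun (i j : Fin k) => hd (Finsupp.cons (j:ℕ) (I i)) P)) i j)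
      (max 0 (ε/2 - (j:ℕ)/(r 0 : ℝ))) := by
    intro i j L hL
    simp only [AlgHom.mapMatrix_apply, Matrix.map_apply, Matrix.of_apply] at hL
    rw [coeff_tr_hd] at hL
    have h1 := hP _ (right_ne_zero_of_mul hL)
    refine max_le (Finset.sum_nonneg fun h _ => by positivity) ?_
    have h2 : ∑ h, ((L + Finsupp.cons (j:ℕ) (I i)) h : ℝ) / r h = ∑ h, 1 / (r h : ℝ) * (L h) + ((j:ℕ) / (r 0:ℝ) + ∑ h : Fin n, (I i h : ℝ) / r h.succ) := by
      have : ∑ h, ((Finsupp.cons (j:ℕ) (I i)) h : ℝ) / r h = ((j:ℕ) / (r 0:ℝ) + ∑ h : Fin n, (I i h : ℝ) / r h.succ) := by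
        rw [Fin.sum_univ_succ]; simp
      rw [← this, ← Finset.sum_add_distrib]
      refine Finset.sum_congr rfl fun h _ => ?_
      simp [add_div]; ring
    have h3 : ∑ h : Fin n, (I i h : ℝ) / r h.succ ≤ ω := by
      have : ∀ h : Fin n, (I i h : ℝ) / r h.succ ≤ (I i h : ℝ) * (ω / r 0) := by
        intro h
        rw [div_eq_mul_inv]
        refine mul_le_mul_of_nonneg_left ?_ (by positivity)
        rw [inv_eq_one_div, div_le_div_iff₀ (hr0 _) (hr0 _)]
        simpa using hrr 0 h.succ (Fin.succ_pos h)
      refine (Finset.sum_le_sum fun h _ => this h).trans ?_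
      rw [← Finset.sum_mul]
      have h4 : (∑ h, (I i h : ℝ)) ≤ r 0 := by
        have := hI i
        have h5 : ∑ h, I i h ≤ r 0 := by omega
        exact_mod_cast h5
      calc (∑ h, (I i h : ℝ)) * (ω / r 0) ≤ r 0 * (ω / r 0) := by gcongr
        _ = ω := by field_simp [(hr0 0).ne']
    rw [h2] at h1
    show _ ≤ ∑ h, 1 / (r h : ℝ) * (L h)
    linarith
  have := Ige_det _ _ hent K hK
  have h2 := sum_max_bound k (r 0) (ε/2) hk (hr 0) hkr (by linarith) (by linarith)
  have h3 : ∑ h, (K h : ℝ) / r h = ∑ h, 1 / (r h : ℝ) * (K h) := Finset.sum_congr rfl fun h _ => by ring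
  rw [h3]
  refine le_trans ?_ (h2.trans this)
  apply le_of_eq; ring

lemma len_W {n k : ℕ} (P : MvPolynomial (Fin (n+1)) ℝ) (r : Fin (n+1) → ℕ) (hr : ∀ h, 0 < r h) (x : ℝ)
    (hR : (∑ h, (r h : ℝ)) ≤ x) (hd' : ∀ h, degreeOf h P ≤ r h) (hl : len P ≤ Real.exp x)
    (hk : 0 < k) (hkr : k ≤ r 0 + 1)
    (I : Fin k → (Fin n →₀ ℕ)) :
    len (Matrix.of fun (i j : Fin k) => hd (Finsupp.cons (j:ℕ) (I i)) P).det ≤ Real.exp (3 * x * k) := by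
  have h2R : (2:ℝ) ^ (∑ i, r i) ≤ Real.exp x := by
    calc (2:ℝ) ^ (∑ i, r i) ≤ (Real.exp 1) ^ (∑ i, r i) := by
          gcongr; linarith [Real.add_one_le_exp (1:ℝ)]
      _ = Real.exp (∑ i, (r i : ℝ)) := by rw [← Real.exp_nat_mul]; push_cast; simp
      _ ≤ _ := Real.exp_le_exp.2 hR
  refine (len_det _ (Real.exp x * Real.exp x) fun i j => ?_).trans ?_
  · refine (len_hd _ P r hd').trans ?_
    exact mul_le_mul h2R hl (len_nonneg _) (Real.exp_pos _).le
  · have h1 : (k.factorial : ℝ) ≤ Real.exp x ^ k := by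
      calc (k.factorial : ℝ) ≤ (k:ℝ)^k := by exact_mod_cast Nat.factorial_le_pow k
        _ ≤ _ := by
          gcongr
          refine le_trans ?_ h2R
          have : k ≤ 2 ^ (∑ i, r i) := by
            have h3 : r 0 + 1 ≤ 2 ^ (r 0) := Nat.lt_two_pow_self
            exact hkr.trans (h3.trans (Nat.pow_le_pow_right (by norm_num) (Finset.single_le_sum (f := r) (fun i _ => Nat.zero_le _) (Finset.mem_univ 0))))
          exact_mod_cast this
    calc _ ≤ Real.exp x ^ k * (Real.exp x * Real.exp x)^k := by gcongr
      _ = Real.exp (3 * x * k) := by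
        rw [← mul_pow, ← Real.exp_add, ← Real.exp_add, ← Real.exp_nat_mul]; ring_nf

lemma degreeOf_slice {n : ℕ} {R : Type*} [CommRing R] (W : MvPolynomial (Fin (n+1)) R) (V : MvPolynomial (Fin n) R) (j : ℕ)
    (h : ∀ J, coeff J V = coeff (Finsupp.cons j J) W) (i : Fin n) : degreeOf i V ≤ degreeOf i.succ W := by
  rw [degreeOf_le_iff]
  intro m hm
  rw [mem_support_iff, h] at hm
  have := (degreeOf_le_iff (n := i.succ) (f := W) (d := degreeOf i.succ W)).1 le_rfl _ (mem_support_iff.2 hm)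
  simpa using this

theorem roth_lemma (n : ℕ) : ∀ ε > (0:ℝ), ∃ ω > (0:ℝ), ∀ (r p q : Fin n → ℕ) (A : ℝ) (P : MvPolynomial (Fin n) ℤ),
    (∀ h, 0 < r h) → (∀ i j, i < j → (r i : ℝ) ≤ ω * r j) → (∀ h, 0 < q h) → (∀ h, Nat.Coprime (p h) (q h)) →
    0 < A → (∀ h, A ≤ r h * Real.log (q h)) → (∑ h, (r h : ℝ)) ≤ ω * A → P ≠ 0 → (∀ h, degreeOf h P ≤ r h) →
    len (map (Int.castRingHom ℝ) P) ≤ Real.exp (ω * A) →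
    ∃ I, coeff I (tr (fun h => (p h : ℝ) / q h) (map (Int.castRingHom ℝ) P)) ≠ 0 ∧ ∑ h, (I h : ℝ) / r h ≤ ε := by
  induction n with
  | zero =>
    intro ε hε
    refine ⟨1, one_pos, ?_⟩
    intro r p q A P _ _ _ _ _ _ _ hP _ _
    have hP' : tr (fun h => (p h : ℝ) / q h) (map (Int.castRingHom ℝ) P) ≠ 0 := by
      have h1 : map (Int.castRingHom ℝ) P ≠ 0 := by
        intro h
        exact hP (map_injective _ (RingHom.injective_int _) (by simpa using h))
      intro h2
      apply h1
      have := tr_tr (fun h => (p h : ℝ) / q h) (fun h => -((p h : ℝ) / q h)) (map (Int.castRingHom ℝ) P)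
      rw [h2, map_zero] at this
      rw [show ((fun h => -((p h : ℝ) / q h)) + (fun h => (p h : ℝ) / q h) : Fin 0 → ℝ) = 0 from by ext i; exact i.elim0] at this
      rw [this]
      unfold tr
      simp
    obtain ⟨I, hI⟩ := ne_zero_iff.1 hP'
    exact ⟨I, hI, by simp [hε.le]⟩
  | succ n ih =>
    intro ε0 hε0
    obtain ⟨ε, hε, hε1, hεε⟩ : ∃ ε : ℝ, 0 < ε ∧ ε ≤ 1 ∧ ε ≤ ε0 := ⟨min ε0 1, by positivity, min_le_right _ _, min_le_left _ _⟩
    obtain ⟨η, hη⟩ : ∃ η : ℝ, η = ε^2/128 := ⟨_, rfl⟩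
    have hη0 : 0 < η := by rw [hη]; positivity
    obtain ⟨ωn, hωn, IH⟩ := ih η hη0
    obtain ⟨ω, hω0, hω1, hω2, hω3⟩ : ∃ ω : ℝ, 0 < ω ∧ 3 * ω ≤ ωn ∧ 3 * ω ≤ η ∧ ω ≤ ε/2 := by
      refine ⟨min (ωn/3) (min (η/3) (ε/2)), by positivity, ?_, ?_, ?_⟩
      · have := min_le_left (ωn/3) (min (η/3) (ε/2)); linarith
      · have := (min_le_right (ωn/3) (min (η/3) (ε/2))).trans (min_le_left _ _); linarith
      · exact (min_le_right (ωn/3) (min (η/3) (ε/2))).trans (min_le_right _ _)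
    refine ⟨ω, hω0, ?_⟩
    intro r p q A P hr hrr hq hpq hA hAq hR hP hdeg hlen
    by_contra hcon
    push Not at hcon
    set β : Fin (n+1) → ℝ := fun h => (p h : ℝ) / q h with hβ
    have inj : Function.Injective (map (σ := Fin (n+1)) (Int.castRingHom ℝ)) := map_injective _ (RingHom.injective_int _)
    have inj' : Function.Injective (map (σ := Fin n) (Int.castRingHom ℝ)) := map_injective _ (RingHom.injective_int _)
    have hPR : map (Int.castRingHom ℝ) P ≠ 0 := by
      intro h; exact hP (inj (by simpa using h))
    have hdegR : ∀ h, degreeOf h (map (Int.castRingHom ℝ) P) ≤ r h := fun h => by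
      rw [degreeOf_le_iff]
      intro m hm
      exact (degreeOf_le_iff.1 (hdeg h)) m (support_map_subset _ _ hm)
    obtain ⟨k, φ, ψ, hk, hkr, hφ, hψ, hdec⟩ := rank_decomp (map (Int.castRingHom ℝ) P) hPR (hdegR 0)
    obtain ⟨I, hI, hV⟩ := mv_wronsk φ hφ
    have hU := poly_wronsk ψ hψ
    have htens := det_tens φ ψ I
    rw [← hdec] at htens
    have hlW := len_W (map (Int.castRingHom ℝ) P) r hr (ω * A) hR hdegR hlen hk hkr I
    have hWZ : map (Int.castRingHom ℝ) (Matrix.of fun (i j : Fin k) => hd (Finsupp.cons (j:ℕ) (I i)) P).det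
        = (Matrix.of fun (i j : Fin k) => hd (Finsupp.cons (j:ℕ) (I i)) (map (Int.castRingHom ℝ) P)).det := by
      rw [RingHom.map_det]
      congr 1
      ext1 i j
      simp [hd_map]
    have hdW : ∀ h, degreeOf h (Matrix.of fun (i j : Fin k) => hd (Finsupp.cons (j:ℕ) (I i)) P).det ≤ k * r h := fun h =>
      degreeOf_det h _ fun i j => (degreeOf_hd _ _ _).trans (hdeg h)
    have hcontra := weight_contra (map (Int.castRingHom ℝ) P) β r hr ω ε hε hε1 hω0 hω3 hrr hk hkr I hI
      (fun K hK => lt_of_le_of_lt hεε (hcon K hK))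
    generalize (Matrix.of fun (i j : Fin k) => hd (Finsupp.cons (j:ℕ) (I i)) P).det = W at *
    rw [← hWZ] at htens hlW hcontra
    generalize (Matrix.of fun i l => hd (I i) (φ l)).det = V at *
    generalize (Matrix.of fun (j : Fin k) l => Polynomial.hasseDeriv (j:ℕ) (ψ l)).det = U at *
    have hcW : ∀ j J, ((coeff (Finsupp.cons j J) W : ℤ) : ℝ) = coeff J V * U.coeff j := by
      intro j J
      rw [← coeff_tens, ← htens, coeff_map]; simp
    obtain ⟨J0, hJ0⟩ := ne_zero_iff.1 hV
    obtain ⟨j0, hj0⟩ : ∃ j, U.coeff j ≠ 0 := by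
      by_contra h; push Not at h; exact hU (Polynomial.ext (by simpa using h))
    have hkR : (0:ℝ) < k := by exact_mod_cast hk
    -- V'
    obtain ⟨V', hV'⟩ : ∃ V' : MvPolynomial (Fin n) ℤ, ∀ J, coeff J V' = coeff (Finsupp.cons j0 J) W :=
      ⟨(finSuccEquiv ℤ n W).coeff j0, fun J => finSuccEquiv_coeff_coeff _ _ _⟩
    have hV'R : map (Int.castRingHom ℝ) V' = C (U.coeff j0) * V := by
      ext J
      rw [coeff_map, hV', coeff_C_mul, mul_comm]
      exact hcW j0 J
    have hV'0 : V' ≠ 0 := by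
      intro h
      rw [h, map_zero] at hV'R
      exact (mul_ne_zero (by simpa using hj0) hV) hV'R.symm
    have hlV' : len (map (Int.castRingHom ℝ) V') ≤ Real.exp (ωn * (k * A)) := by
      refine (len_slice (map (Int.castRingHom ℝ) W) _ j0 fun J => ?_).trans (hlW.trans ?_)
      · rw [coeff_map, coeff_map, hV']
      · apply Real.exp_le_exp.2
        calc 3 * (ω * A) * k = (3 * ω) * (k * A) := by ring
          _ ≤ _ := by gcongr
    obtain ⟨J, hJ, hJw⟩ := IH (fun h => k * r h.succ) (fun h => p h.succ) (fun h => q h.succ) (k * A) V'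
      (fun h => Nat.mul_pos hk (hr _))
      (fun i j hij => by
        push_cast
        have h1 := hrr i.succ j.succ (Fin.succ_lt_succ_iff.2 hij)
        calc (k:ℝ) * r i.succ ≤ k * (ω * r j.succ) := by gcongr
          _ = ω * (k * r j.succ) := by ring
          _ ≤ _ := by gcongr; linarith)
      (fun h => hq _) (fun h => hpq _) (by positivity)
      (fun h => by
        push_cast
        have := hAq h.succ
        calc (k:ℝ) * A ≤ k * (r h.succ * Real.log (q h.succ)) := by gcongr
          _ = _ := by ring)
      (by
        push_cast
        rw [← Finset.mul_sum]
        have h1 : ∑ h : Fin n, (r h.succ : ℝ) ≤ ω * A := by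
          refine le_trans ?_ hR
          rw [Fin.sum_univ_succ]
          have : (0:ℝ) ≤ r 0 := by positivity
          linarith
        calc (k:ℝ) * ∑ h : Fin n, (r h.succ : ℝ) ≤ k * (ω * A) := by gcongr
          _ = ω * (k * A) := by ring
          _ ≤ _ := by gcongr; linarith)
      hV'0 (fun h => (degreeOf_slice W V' j0 hV' h).trans (hdW _)) hlV'
    -- U'
    obtain ⟨U', hU'⟩ : ∃ U' : Polynomial ℤ, ∀ j, U'.coeff j = coeff (Finsupp.cons j J0) W := by
      refine ⟨∑ j ∈ Finset.range (U.natDegree + 1), Polynomial.monomial j (coeff (Finsupp.cons j J0) W), fun j => ?_⟩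
      rw [Polynomial.finset_sum_coeff]
      simp only [Polynomial.coeff_monomial]
      rw [Finset.sum_ite_eq']
      split_ifs with h
      · rfl
      · have h1 := hcW j J0
        rw [Polynomial.coeff_eq_zero_of_natDegree_lt (by simp at h; omega), mul_zero] at h1
        exact_mod_cast h1.symm
    have hU'R : U'.map (Int.castRingHom ℝ) = Polynomial.C (coeff J0 V) * U := by
      ext j
      rw [Polynomial.coeff_map, hU', Polynomial.coeff_C_mul]
      exact hcW j J0
    have hU'0 : U' ≠ 0 := by
      intro h
      rw [h, Polynomial.map_zero] at hU'R
      exact (mul_ne_zero (by simpa using hJ0) hU) hU'R.symm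
    obtain ⟨l, hl, hlb⟩ := univ_lemma U' hU'0 (p 0) (q 0) (hq 0) (hpq 0)
    have hlogq : 0 < Real.log (q 0) := by
      by_contra h
      push Not at h
      have := hAq 0
      have h2 : (r 0 : ℝ) * Real.log (q 0) ≤ 0 := mul_nonpos_of_nonneg_of_nonpos (by positivity) h
      linarith
    have hr0 : (0:ℝ) < r 0 := by exact_mod_cast hr 0
    have hlw : (l:ℝ) / r 0 ≤ k * η := by
      have h1 : (q 0 : ℝ)^l ≤ Real.exp (3 * (ω * A) * k) := by
        refine hlb.trans (le_trans ?_ hlW)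
        rw [Polynomial.leadingCoeff, hU']
        have := abs_coeff_le_len (map (Int.castRingHom ℝ) W) (Finsupp.cons U'.natDegree J0)
        rw [coeff_map] at this
        exact this
      have h2 : l * Real.log (q 0) ≤ 3 * (ω * A) * k := by
        rw [← Real.log_pow, Real.log_le_iff_le_exp (by have := hq 0; positivity)]
        exact h1
      have h3 : l * Real.log (q 0) ≤ (k * η * r 0) * Real.log (q 0) := by
        calc l * Real.log (q 0) ≤ 3 * (ω * A) * k := h2
          _ = (3 * ω) * k * A := by ring
          _ ≤ η * k * (r 0 * Real.log (q 0)) := by gcongr; exact hAq 0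
          _ = _ := by ring
      rw [div_le_iff₀ hr0]
      exact le_of_mul_le_mul_right h3 hlogq
    have hfin := hcontra (Finsupp.cons l J) (by
      rw [htens, coeff_tr_tens]
      refine mul_ne_zero ?_ ?_
      · rw [hV'R, map_mul] at hJ
        have : tr (fun h : Fin n => (p h.succ : ℝ) / q h.succ) (C (U.coeff j0)) = C (U.coeff j0) := by
          unfold tr; simp [algebraMap_eq]
        rw [this, coeff_C_mul] at hJ
        exact right_ne_zero_of_mul hJ
      · rw [hU'R, Polynomial.taylor_mul, Polynomial.taylor_C, Polynomial.coeff_C_mul] at hl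
        exact right_ne_zero_of_mul hl)
    rw [Fin.sum_univ_succ] at hfin
    simp only [Finsupp.cons_zero, Finsupp.cons_succ] at hfin
    have hJw2 : ∑ h : Fin n, (J h : ℝ) / r h.succ ≤ k * η := by
      have : ∑ h : Fin n, (J h : ℝ) / r h.succ = k * ∑ h : Fin n, (J h : ℝ) / ((k * r h.succ : ℕ) : ℝ) := by
        rw [Finset.mul_sum]
        refine Finset.sum_congr rfl fun h _ => ?_
        push_cast
        field_simp
      rw [this]
      gcongr
    have : 0 < k * ε^2 := by positivity
    have h9 : k * ε^2/32 ≤ k * (ε^2/128) + k * (ε^2/128) := by rw [← hη]; linarith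
    linarith

end WN
namespace WN
open MvPolynomial
open scoped Matrix.Norms.Elementwise

lemma factor_bound (r : ℕ) (hr : 0 < r) (l : ℝ) :
    ∑ i : Fin (r+1), Real.exp (l * (1/2 - (i:ℕ)/(r:ℝ))) ≤ (r+1) * Real.exp (l^2/8) := by
  have hr0 : (0:ℝ) < r := by exact_mod_cast hr
  have h1 : ∑ i : Fin (r+1), Real.exp (l * (1/2 - (i:ℕ)/(r:ℝ))) = ∑ i : Fin (r+1), Real.exp (-(l * (1/2 - (i:ℕ)/(r:ℝ)))) := by
    rw [← Equiv.sum_comp Fin.revPerm]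
    refine Finset.sum_congr rfl fun i _ => ?_
    congr 1
    rw [Fin.revPerm_apply, Fin.val_rev]
    have : i.val ≤ r := by omega
    rw [show r + 1 - (i.val + 1) = r - i.val by omega, Nat.cast_sub this]
    field_simp
    ring
  have h2 : ∑ i : Fin (r+1), Real.exp (l * (1/2 - (i:ℕ)/(r:ℝ))) = ∑ i : Fin (r+1), Real.cosh (l * (1/2 - (i:ℕ)/(r:ℝ))) := by
    have : ∑ i : Fin (r+1), Real.cosh (l * (1/2 - (i:ℕ)/(r:ℝ))) = (∑ i : Fin (r+1), Real.exp (l * (1/2 - (i:ℕ)/(r:ℝ))) + ∑ i : Fin (r+1), Real.exp (-(l * (1/2 - (i:ℕ)/(r:ℝ)))))/2 := by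
      rw [← Finset.sum_add_distrib, Finset.sum_div]
      exact Finset.sum_congr rfl fun i _ => Real.cosh_eq _
    rw [this, ← h1]; ring
  rw [h2]
  have h3 : ∀ i : Fin (r+1), Real.cosh (l * (1/2 - (i:ℕ)/(r:ℝ))) ≤ Real.exp (l^2/8) := by
    intro i
    refine (Real.cosh_le_exp_half_sq _).trans (Real.exp_le_exp.2 ?_)
    have h0 : (0:ℝ) ≤ (i:ℕ)/(r:ℝ) := by positivity
    have h1 : (i:ℕ)/(r:ℝ) ≤ 1 := by
      rw [div_le_one hr0]; exact_mod_cast Nat.lt_succ_iff.1 i.2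
    have : (1/2 - (i:ℕ)/(r:ℝ))^2 ≤ 1/4 := by nlinarith
    rw [mul_pow]
    nlinarith [sq_nonneg l]
  refine (Finset.sum_le_sum fun i _ => h3 i).trans ?_
  simp

lemma count_bound (m : ℕ) (r : Fin m → ℕ) (hr : ∀ h, 0 < r h) (η : ℝ) (hη : 0 < η) (hm : 5 ≤ 2 * m * η^2) :
    6 * (Fintype.card {I : (∀ h, Fin (r h + 1)) // ∑ h, ((I h : ℕ) : ℝ) / r h < m * (1/2 - η)}) ≤ ∏ h, (r h + 1) := by
  classical
  have h1 : ∑ I : (∀ h, Fin (r h + 1)), ∏ h, Real.exp (4 * η * (1/2 - (I h : ℕ)/(r h : ℝ))) ≤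
      (∏ h, ((r h : ℝ) + 1)) * Real.exp (2 * m * η^2) := by
    rw [← Fintype.prod_sum (f := fun h (i : Fin (r h + 1)) => Real.exp (4 * η * (1/2 - (i : ℕ)/(r h : ℝ))))]
    refine (Finset.prod_le_prod (fun _ _ => Finset.sum_nonneg fun _ _ => (Real.exp_pos _).le) fun h _ => factor_bound (r h) (hr h) (4 * η)).trans ?_
    rw [Finset.prod_mul_distrib, Finset.prod_const, ← Real.exp_nat_mul]
    simp
    refine mul_le_mul_of_nonneg_left (Real.exp_le_exp.2 (le_of_eq (by ring))) (Finset.prod_nonneg fun _ _ => by positivity)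
  rw [Fintype.card_subtype]
  set s := Finset.univ.filter fun I : (∀ h, Fin (r h + 1)) => ∑ h, ((I h : ℕ) : ℝ) / r h < m * (1/2 - η) with hs
  have h2 : (s.card : ℝ) * Real.exp (4 * m * η^2) ≤ ∑ I : (∀ h, Fin (r h + 1)), ∏ h, Real.exp (4 * η * (1/2 - (I h : ℕ)/(r h : ℝ))) := by
    calc (s.card : ℝ) * Real.exp (4 * m * η^2) = ∑ I ∈ s, Real.exp (4 * m * η^2) := by simp
      _ ≤ ∑ I ∈ s, ∏ h, Real.exp (4 * η * (1/2 - (I h : ℕ)/(r h : ℝ))) := by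
        refine Finset.sum_le_sum fun I hI => ?_
        rw [hs, Finset.mem_filter] at hI
        rw [← Real.exp_sum]
        apply Real.exp_le_exp.2
        rw [← Finset.mul_sum, Finset.sum_sub_distrib]
        simp only [Finset.sum_const, Finset.card_univ, Fintype.card_fin, nsmul_eq_mul]
        nlinarith [hI.2]
      _ ≤ _ := Finset.sum_le_sum_of_subset_of_nonneg (Finset.subset_univ _) fun _ _ _ => Finset.prod_nonneg fun _ _ => (Real.exp_pos _).le
  have h3 : (s.card : ℝ) * Real.exp (2 * m * η^2) ≤ ∏ h, ((r h : ℝ) + 1) := by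
    have := h2.trans h1
    rw [show 4 * m * η^2 = 2 * m * η^2 + 2 * m * η^2 by ring, Real.exp_add, ← mul_assoc] at this
    exact le_of_mul_le_mul_right this (Real.exp_pos _)
  have h4 : (6:ℝ) ≤ Real.exp (2 * m * η^2) := by
    linarith [Real.add_one_le_exp (2 * m * η^2)]
  have h5 : (6:ℝ) * s.card ≤ ∏ h, ((r h : ℝ) + 1) := by
    refine le_trans ?_ h3
    rw [mul_comm]; gcongr
  exact_mod_cast h5

lemma cube_pow (α : ℝ) (hα : α^3 = 2) (k : ℕ) : α^k = 2^(k/3) * α^(k%3) := by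
  conv_lhs => rw [← Nat.div_add_mod k 3, pow_add, pow_mul, hα]

theorem aux_poly (m : ℕ) (η : ℝ) (hη : 0 < η) (hη' : η < 1/2) (hm : 5 ≤ 2 * m * η^2) (α : ℝ) (hα : α^3 = 2)
    (r : Fin m → ℕ) (hr : ∀ h, 0 < r h) :
    ∃ P : MvPolynomial (Fin m) ℤ, P ≠ 0 ∧ (∀ h, degreeOf h P ≤ r h) ∧
      len (map (Int.castRingHom ℝ) P) ≤ 16^(∑ h, r h) ∧
      ∀ I, ∑ h, (I h : ℝ) / r h < m * (1/2 - η) → coeff I (tr (fun _ => α) (map (Int.castRingHom ℝ) P)) = 0 := by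
  classical
  have hm0 : 0 < m := by
    rcases Nat.eq_zero_or_pos m with h | h
    · subst h; norm_num at hm
    · exact h
  have hcount := count_bound m r hr η hη hm
  have hN : Fintype.card (∀ h, Fin (r h + 1)) = ∏ h, (r h + 1) := by simp
  have hN0 : 0 < ∏ h, (r h + 1) := Finset.prod_pos fun _ _ => by omega
  have hN2 : ∏ h, (r h + 1) ≤ 2 ^ (∑ h, r h) := by
    rw [← Finset.prod_pow_eq_pow_sum]
    exact Finset.prod_le_prod' fun h _ => Nat.lt_two_pow_self
  set B := (∀ h, Fin (r h + 1)) with hB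
  set S := {I : B // ∑ h, ((I h : ℕ) : ℝ) / r h < m * (1/2 - η)} with hS
  have hS0 : 0 < Fintype.card S := by
    apply Fintype.card_pos_iff.2
    refine ⟨⟨fun h => 0, ?_⟩⟩
    simp
    have : (0:ℝ) < m := by exact_mod_cast hm0
    have h2 : 0 < 2⁻¹ - η := by linarith
    positivity
  replace hcount : 6 * Fintype.card S ≤ ∏ h, (r h + 1) := by convert hcount
  let e : B → (Fin m →₀ ℕ) := fun j => Finsupp.equivFunOnFinite.symm fun h => (j h : ℕ)
  have he : ∀ j h, e j h = (j h : ℕ) := fun j h => rfl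
  have hinj : Function.Injective e := by
    intro a b hab
    funext h
    apply Fin.ext
    have := DFunLike.congr_fun hab h
    exact this
  let ex : B → B → ℕ := fun j I => ∑ h, ((j h : ℕ) - (I h : ℕ))
  let M : Matrix (S × Fin 3) B ℤ := fun x j => if ex j x.1.1 % 3 = x.2 then (mch (e j) (e x.1.1) : ℤ) * 2 ^ (ex j x.1.1 / 3) else 0
  have hcS : Fintype.card (S × Fin 3) = 3 * Fintype.card S := by simp [mul_comm]
  have hcB : Fintype.card B = ∏ h, (r h + 1) := hN
  obtain ⟨t, ht0, htM, htn⟩ := Int.Matrix.exists_ne_zero_int_vec_norm_le M (by rw [hcS, hcB]; omega) (by rw [hcS]; omega)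
  set R := ∑ h, r h with hR
  have hex : ∀ j I, ex j I ≤ R := fun j I => Finset.sum_le_sum fun h _ => by have := (j h).2; omega
  have hMn : ∀ x j, ‖M x j‖ ≤ 4^R := by
    intro x j
    simp only [M]
    split_ifs
    · rw [Int.norm_eq_abs]
      push_cast
      rw [abs_of_nonneg (by positivity)]
      have h1 : mch (e j) (e x.1.1) ≤ 2^R := mch_le _ _ r fun i => by rw [he]; have := (j i).2; omega
      have h2 : 2 ^ (ex j x.1.1 / 3) ≤ 2^R := Nat.pow_le_pow_right (by norm_num) ((Nat.div_le_self _ _).trans (hex _ _))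
      have h3 := Nat.mul_le_mul h1 h2
      rw [← mul_pow] at h3
      exact_mod_cast h3
    · simp
  have htb : ∀ j, |(t j : ℝ)| ≤ 8^R := by
    intro j
    have h1 : |(t j : ℝ)| ≤ ‖t‖ := by
      have := norm_le_pi_norm t j
      rwa [Int.norm_eq_abs] at this
    refine h1.trans (htn.trans ?_)
    have hb : max 1 ‖M‖ ≤ 4^R := by
      refine max_le (one_le_pow₀ (by norm_num)) ?_
      rw [Matrix.norm_le_iff (by positivity)]
      exact hMn
    have hbase : ((Fintype.card B : ℕ):ℝ) * max 1 ‖M‖ ≤ 8^R := by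
      calc ((Fintype.card B : ℕ):ℝ) * max 1 ‖M‖ ≤ 2^R * 4^R := by
            gcongr
            rw [hcB]; exact_mod_cast hN2
        _ = 8^R := by rw [← mul_pow]; norm_num
    have hb1 : 1 ≤ ((Fintype.card B : ℕ):ℝ) * max 1 ‖M‖ := by
      have h2 : (1:ℝ) ≤ ((Fintype.card B : ℕ):ℝ) := by rw [hcB]; exact_mod_cast hN0
      have h3 : (1:ℝ) ≤ max 1 ‖M‖ := le_max_left _ _
      nlinarith
    refine le_trans ?_ hbase
    refine (Real.rpow_le_rpow_of_exponent_le hb1 (?_ : _ ≤ (1:ℝ))).trans (by rw [Real.rpow_one])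
    have h6 : (6:ℝ) * Fintype.card S ≤ Fintype.card B := by rw [hcB]; exact_mod_cast hcount
    have h7 : (0:ℝ) < Fintype.card S := by exact_mod_cast hS0
    have h8 : ((Fintype.card (S × Fin 3) : ℕ) : ℝ) = 3 * Fintype.card S := by rw [hcS]; push_cast; ring
    rw [h8, div_le_one (by linarith)]
    linarith
  let P : MvPolynomial (Fin m) ℤ := ∑ j, monomial (e j) (t j)
  have hcP : ∀ j, coeff (e j) P = t j := by
    intro j
    simp only [P, coeff_sum, coeff_monomial]
    rw [Finset.sum_eq_single j]
    · exact if_pos rfl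
    · intro b _ hb
      exact if_neg fun h => hb (hinj h)
    · simp
  have hPR : map (Int.castRingHom ℝ) P = ∑ j, monomial (e j) (t j : ℝ) := by
    simp only [P, map_sum, map_monomial]; rfl
  refine ⟨P, ?_, ?_, ?_, ?_⟩
  · intro h
    apply ht0
    funext j
    rw [← hcP, h]; simp
  · intro h
    rw [degreeOf_le_iff]
    intro s hs
    rw [mem_support_iff] at hs
    have : ∃ j, e j = s := by
      by_contra hc
      push Not at hc
      apply hs
      simp only [P, coeff_sum, coeff_monomial]
      exact Finset.sum_eq_zero fun j _ => if_neg (hc j)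
    obtain ⟨j, rfl⟩ := this
    rw [he]; have := (j h).2; omega
  · rw [hPR]
    refine (len_sum _ _).trans ?_
    calc ∑ j, len (monomial (e j) (t j : ℝ)) ≤ ∑ j : B, (8:ℝ)^R := Finset.sum_le_sum fun j _ => by rw [len_monomial]; exact htb j
      _ = (Fintype.card B : ℝ) * 8^R := by simp
      _ ≤ 2^R * 8^R := by gcongr; rw [hcB]; exact_mod_cast hN2
      _ = 16^R := by rw [← mul_pow]; norm_num
  · intro I hI
    rw [coeff_tr, hPR, hd_sum, map_sum]
    by_cases hIr : ∀ h, I h < r h + 1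
    · let I' : B := fun h => ⟨I h, hIr h⟩
      have hII : e I' = I := by ext h; rfl
      let x : S := ⟨I', hI⟩
      have hterm : ∀ j : B, eval (fun _ => α) (hd I (monomial (e j) (t j : ℝ))) = ∑ c : Fin 3, α^(c:ℕ) * ((M (x, c) j : ℝ) * t j) := by
        intro j
        rw [hd_monomial, eval_monomial, Finsupp.prod_fintype _ _ (by simp), Finset.prod_pow_eq_pow_sum]
        have h1 : ∑ i, (e j - I) i = ex j I' := rfl
        rw [h1, cube_pow α hα]
        have h2 : ex j I' % 3 < 3 := Nat.mod_lt _ (by norm_num)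
        rw [Finset.sum_eq_single ⟨ex j I' % 3, h2⟩]
        · simp only [M, x, if_true, hII]
          push_cast
          ring
        · intro c _ hc
          have : ¬ (ex j I' % 3 = (c:ℕ)) := fun h => hc (Fin.ext h.symm)
          simp [M, x, this]
        · simp
      simp only [hterm]
      rw [Finset.sum_comm]
      refine Finset.sum_eq_zero fun c _ => ?_
      rw [← Finset.mul_sum]
      have := congrFun htM (x, c)
      rw [Matrix.mulVec, dotProduct] at this
      have h2 : ∑ j, (M (x, c) j : ℝ) * t j = 0 := by exact_mod_cast this
      rw [h2, mul_zero]
    · push Not at hIr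
      obtain ⟨h, hh⟩ := hIr
      refine Finset.sum_eq_zero fun j _ => ?_
      rw [hd_monomial, mch_eq_zero]
      · simp
      · intro hle
        have := hle h
        rw [he] at this
        have := (j h).2
        omega

end WN
namespace WN
open MvPolynomial

lemma degreeOf_tr {n : ℕ} {R : Type*} [CommRing R] (β : Fin n → R) (P : MvPolynomial (Fin n) R) (r : Fin n → ℕ)
    (h : ∀ i, degreeOf i P ≤ r i) (i : Fin n) : degreeOf i (tr β P) ≤ r i := by
  rw [degreeOf_le_iff]
  intro J hJ
  rw [mem_support_iff, coeff_tr] at hJ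
  have h1 : hd J P ≠ 0 := by
    intro h0; rw [h0] at hJ; simp at hJ
  obtain ⟨K, hK⟩ := ne_zero_iff.1 h1
  rw [coeff_hd] at hK
  have := degreeOf_le_iff.1 (h i) _ (mem_support_iff.2 (right_ne_zero_of_mul hK))
  simp at this
  omega

lemma int_eval {n : ℕ} (N : MvPolynomial (Fin n) ℤ) (r p q : Fin n → ℕ) (hq : ∀ h, 0 < q h)
    (hdeg : ∀ h, degreeOf h N ≤ r h) :
    ∃ z : ℤ, (∏ h, (q h : ℝ)^(r h)) * eval (fun h => (p h : ℝ) / q h) (map (Int.castRingHom ℝ) N) = z := by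
  refine ⟨∑ S ∈ N.support, coeff S N * ∏ h, ((p h : ℤ)^(S h) * (q h : ℤ)^(r h - S h)), ?_⟩
  rw [eval_map, eval₂_eq', Finset.mul_sum]
  push_cast
  refine Finset.sum_congr rfl fun S hS => ?_
  rw [mul_left_comm, ← Finset.prod_mul_distrib]
  congr 1
  refine Finset.prod_congr rfl fun h _ => ?_
  have hle := degreeOf_le_iff.1 (hdeg h) _ hS
  have hq0 : (q h : ℝ) ≠ 0 := by have := hq h; positivity
  obtain ⟨t, ht⟩ := Nat.exists_eq_add_of_le hle
  rw [ht, Nat.add_sub_cancel_left, div_pow, pow_add]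
  field_simp

lemma eval_le {n : ℕ} (N : MvPolynomial (Fin n) ℝ) (γ : Fin n → ℝ) (B : ℝ)
    (hB : ∀ J, coeff J N ≠ 0 → ∏ h, |γ h|^(J h) ≤ B) : |eval γ N| ≤ len N * B := by
  rw [eval_eq', len, Finset.sum_mul]
  refine (Finset.abs_sum_le_sum_abs _ _).trans (Finset.sum_le_sum fun S hS => ?_)
  rw [abs_mul, Finset.abs_prod]
  simp only [abs_pow]
  exact mul_le_mul_of_nonneg_left (hB S (mem_support_iff.1 hS)) (abs_nonneg _)

lemma core (δ η : ℝ) (hδ : 0 < δ) (hδ1 : δ ≤ 1) (hη : η = δ/24) (m : ℕ) (hm : 5 ≤ 2 * m * η^2) (ω : ℝ)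
    (α : ℝ) (hα : α^3 = 2) (hα3 : |α| ≤ 3)
    (H : ∀ (r p q : Fin m → ℕ) (A : ℝ) (P : MvPolynomial (Fin m) ℤ),
    (∀ h, 0 < r h) → (∀ i j, i < j → (r i : ℝ) ≤ ω * r j) → (∀ h, 0 < q h) → (∀ h, Nat.Coprime (p h) (q h)) →
    0 < A → (∀ h, A ≤ r h * Real.log (q h)) → (∑ h, (r h : ℝ)) ≤ ω * A → P ≠ 0 → (∀ h, degreeOf h P ≤ r h) →
    len (map (Int.castRingHom ℝ) P) ≤ Real.exp (ω * A) →
    ∃ I, coeff I (tr (fun h => (p h : ℝ) / q h) (map (Int.castRingHom ℝ) P)) ≠ 0 ∧ ∑ h, (I h : ℝ) / r h ≤ η)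
    (r p q : Fin m → ℕ) (A : ℝ) (hr : ∀ h, 0 < r h) (hrr : ∀ i j, i < j → (r i : ℝ) ≤ ω * r j)
    (hq : ∀ h, 0 < q h) (hpq : ∀ h, Nat.Coprime (p h) (q h)) (hA : 0 < A)
    (hA1 : ∀ h, A ≤ r h * Real.log (q h)) (hA2 : ∀ h, r h * Real.log (q h) ≤ (1 + η) * A)
    (hR1 : 3 * (∑ h, (r h : ℝ)) ≤ ω * A) (hR2 : 5 * (∑ h, (r h : ℝ)) ≤ η * A)
    (hbad : ∀ h, |α - (p h : ℝ) / q h| ≤ Real.exp (-(2 + δ) * Real.log (q h))) : False := by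
  have hη0 : 0 < η := by rw [hη]; positivity
  have hm0 : 0 < m := by
    rcases Nat.eq_zero_or_pos m with h | h
    · subst h; norm_num at hm
    · exact h
  have hm1 : (1:ℝ) ≤ m := by exact_mod_cast hm0
  obtain ⟨P, hP0, hPd, hPl, hPα⟩ := aux_poly m η hη0 (by linarith) hm α hα r hr
  have hRn : (0:ℝ) ≤ ∑ h, (r h : ℝ) := Finset.sum_nonneg fun _ _ => by positivity
  have e1 : (2.7:ℝ) < Real.exp 1 := by have := Real.exp_one_gt_d9; linarith
  have h16 : (16:ℝ)^(∑ h, r h) ≤ Real.exp (3 * ∑ h, (r h:ℝ)) := by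
    calc (16:ℝ)^(∑ h, r h) ≤ (Real.exp 3)^(∑ h, r h) := by
          gcongr
          rw [show (3:ℝ) = (3:ℕ) * 1 by norm_num, Real.exp_nat_mul]
          calc (16:ℝ) ≤ 2.7^3 := by norm_num
            _ ≤ _ := by gcongr
      _ = _ := by rw [← Real.exp_nat_mul]; push_cast; ring_nf
  have h128 : (128:ℝ)^(∑ h, r h) ≤ Real.exp (5 * ∑ h, (r h:ℝ)) := by
    calc (128:ℝ)^(∑ h, r h) ≤ (Real.exp 5)^(∑ h, r h) := by
          gcongr
          rw [show (5:ℝ) = (5:ℕ) * 1 by norm_num, Real.exp_nat_mul]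
          calc (128:ℝ) ≤ 2.7^5 := by norm_num
            _ ≤ _ := by gcongr
      _ = _ := by rw [← Real.exp_nat_mul]; push_cast; ring_nf
  obtain ⟨I, hI, hIw⟩ := H r p q A P hr hrr hq hpq hA hA1 (by linarith) hP0 hPd
    (hPl.trans (h16.trans (Real.exp_le_exp.2 hR1)))
  have hPdR : ∀ h, degreeOf h (map (Int.castRingHom ℝ) P) ≤ r h := fun h => by
    rw [degreeOf_le_iff]
    intro s hs
    exact (degreeOf_le_iff.1 (hPd h)) s (support_map_subset _ _ hs)
  -- lower bound
  have hlow : Real.exp (-(m * ((1 + η) * A))) ≤ |coeff I (tr (fun h => (p h : ℝ) / q h) (map (Int.castRingHom ℝ) P))| := by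
    obtain ⟨z, hz⟩ := int_eval (hd I P) r p q hq fun h => (degreeOf_hd _ _ _).trans (hPd h)
    rw [← hd_map, ← coeff_tr] at hz
    have hpr : (∏ h, (q h : ℝ)^(r h)) = Real.exp (∑ h, r h * Real.log (q h)) := by
      rw [Real.exp_sum]
      refine Finset.prod_congr rfl fun h _ => ?_
      rw [Real.exp_nat_mul, Real.exp_log (by exact_mod_cast hq h)]
    have hz0 : z ≠ 0 := by
      intro h0
      rw [h0, Int.cast_zero, hpr] at hz
      exact (mul_ne_zero (Real.exp_pos _).ne' hI) hz
    have hz1 : (1:ℝ) ≤ |(z:ℝ)| := by exact_mod_cast Int.one_le_abs hz0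
    rw [← hz, hpr, abs_mul, abs_of_pos (Real.exp_pos _)] at hz1
    have hs : ∑ h, r h * Real.log (q h) ≤ m * ((1 + η) * A) := by
      refine (Finset.sum_le_sum fun h _ => hA2 h).trans (le_of_eq ?_)
      simp
    rw [Real.exp_neg, inv_eq_one_div, div_le_iff₀ (Real.exp_pos _)]
    refine hz1.trans ?_
    rw [mul_comm]
    gcongr
  -- upper bound
  have hup : |coeff I (tr (fun h => (p h : ℝ) / q h) (map (Int.castRingHom ℝ) P))| ≤
      Real.exp (5 * ∑ h, (r h:ℝ)) * Real.exp (-((2 + δ) * A * (m * (1/2 - η) - η))) := by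
    have htr : tr (fun h => (p h : ℝ) / q h) (map (Int.castRingHom ℝ) P) =
        tr (fun h => (p h : ℝ) / q h - α) (tr (fun _ => α) (map (Int.castRingHom ℝ) P)) := by
      rw [tr_tr]
      congr 2
      funext h
      simp
    rw [htr, coeff_tr]
    refine (eval_le _ _ (Real.exp (-((2 + δ) * A * (m * (1/2 - η) - η)))) ?_).trans ?_
    · intro J hJ
      rw [coeff_hd] at hJ
      have hJ2 : m * (1/2 - η) ≤ ∑ h, ((J + I) h : ℝ) / r h := by
        by_contra hc
        push Not at hc
        exact right_ne_zero_of_mul hJ (hPα _ hc)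
      have hJ3 : ∑ h, ((J + I) h : ℝ) / r h = ∑ h, (J h : ℝ) / r h + ∑ h, (I h : ℝ) / r h := by
        rw [← Finset.sum_add_distrib]
        refine Finset.sum_congr rfl fun h _ => ?_
        simp [add_div]
      have hJ4 : m * (1/2 - η) - η ≤ ∑ h, (J h : ℝ) / r h := by linarith
      calc ∏ h, |(p h : ℝ) / q h - α|^(J h) ≤ ∏ h, Real.exp (-((2 + δ) * A * ((J h : ℝ) / r h))) := by
            refine Finset.prod_le_prod (fun _ _ => by positivity) fun h _ => ?_
            have hrh : (0:ℝ) < r h := by exact_mod_cast hr h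
            rw [abs_sub_comm]
            calc |α - (p h : ℝ) / q h|^(J h) ≤ (Real.exp (-(2 + δ) * Real.log (q h)))^(J h) := by gcongr; exact hbad h
              _ = Real.exp (-((2 + δ) * (J h * Real.log (q h)))) := by rw [← Real.exp_nat_mul]; ring_nf
              _ ≤ _ := by
                apply Real.exp_le_exp.2
                apply neg_le_neg
                rw [mul_assoc]
                apply mul_le_mul_of_nonneg_left _ (by linarith)
                have h1 : A / r h ≤ Real.log (q h) := by
                  rw [div_le_iff₀ hrh]; linarith [hA1 h]
                calc A * ((J h : ℝ) / r h) = J h * (A / r h) := by ring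
                  _ ≤ _ := by gcongr
        _ = Real.exp (-((2 + δ) * A * ∑ h, (J h : ℝ) / r h)) := by
            rw [← Real.exp_sum, Finset.sum_neg_distrib, Finset.mul_sum]
        _ ≤ _ := by
            apply Real.exp_le_exp.2
            apply neg_le_neg
            apply mul_le_mul_of_nonneg_left hJ4 (by positivity)
    · apply mul_le_mul_of_nonneg_right _ (Real.exp_pos _).le
      refine le_trans ?_ h128
      refine (len_hd I _ r fun i => degreeOf_tr _ _ r hPdR i).trans ?_
      calc (2:ℝ)^(∑ h, r h) * len (tr (fun _ => α) (map (Int.castRingHom ℝ) P))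
          ≤ (2:ℝ)^(∑ h, r h) * (4^(∑ h, r h) * 16^(∑ h, r h)) := by
            gcongr
            refine (len_tr _ _ r hPdR fun _ => hα3).trans ?_
            gcongr
        _ = _ := by rw [← mul_pow, ← mul_pow]; norm_num
  have hc := hlow.trans hup
  rw [← Real.exp_add, Real.exp_le_exp] at hc
  have h1 : (2 + δ) * A * (m * (1/2 - η) - η) ≤ η * A + m * ((1 + η) * A) := by linarith
  have h2 : (2 + δ) * (m * (1/2 - η) - η) ≤ η + m * (1 + η) := by
    refine le_of_mul_le_mul_right ?_ hA
    linarith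
  have h3 : m * (1/2 - η) - η ≥ m * (1/2 - 2 * η) := by nlinarith
  have h4 : (2 + δ) * (m * (1/2 - 2*η)) ≤ m * (1 + 2 * η) := by nlinarith
  have h5 : (2 + δ) * (1/2 - 2*η) ≤ 1 + 2 * η := by
    refine le_of_mul_le_mul_left ?_ (show (0:ℝ) < m by linarith)
    linarith
  rw [hη] at h5
  nlinarith

theorem roth (δ : ℝ) (hδ : 0 < δ) (hδ1 : δ ≤ 1) (α : ℝ) (hα : α^3 = 2) (hα3 : |α| ≤ 3) :
    ∃ Q0 : ℕ, ∀ p q : ℕ, Nat.Coprime p q → Q0 < q → Real.exp (-(2 + δ) * Real.log q) < |α - (p:ℝ)/q| := by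
  by_contra hcon
  push Not at hcon
  obtain ⟨η, hη⟩ : ∃ η : ℝ, η = δ/24 := ⟨_, rfl⟩
  have hη0 : 0 < η := by rw [hη]; positivity
  obtain ⟨m, hm⟩ := exists_nat_gt (5 / (2 * η^2))
  rw [div_lt_iff₀ (by positivity)] at hm
  obtain ⟨ω, hω, H⟩ := roth_lemma m η hη0
  have hex : ∀ x : ℝ, ∃ s : ℕ × ℕ, Nat.Coprime s.1 s.2 ∧ 0 < s.2 ∧ x ≤ Real.log s.2 ∧
      |α - (s.1:ℝ)/s.2| ≤ Real.exp (-(2 + δ) * Real.log s.2) := by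
    intro x
    obtain ⟨Q, hQ⟩ := exists_nat_gt (Real.exp x)
    obtain ⟨p, q, hpq, hq, hb⟩ := hcon Q
    refine ⟨(p, q), hpq, by simp; omega, ?_, hb⟩
    rw [Real.le_log_iff_exp_le (by exact_mod_cast (show 0 < q by omega))]
    exact hQ.le.trans (by exact_mod_cast hq.le)
  choose g hg1 hg2 hg3 hg4 using hex
  obtain ⟨w, hw0, hw1, hw2⟩ : ∃ w : ℝ, 0 < w ∧ 3 * w ≤ ω ∧ 5 * w ≤ η :=
    ⟨min (ω/3) (η/5), by positivity, by linarith [min_le_left (ω/3) (η/5)], by linarith [min_le_right (ω/3) (η/5)]⟩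
  obtain ⟨L, hL⟩ : ∃ L : ℝ, L = 2 * (m+1) / w := ⟨_, rfl⟩
  have hL0 : 0 < L := by rw [hL]; positivity
  obtain ⟨c, hc1, hc2⟩ : ∃ c : ℝ, 1 ≤ c ∧ 2 / ω ≤ c := ⟨max 1 (2/ω), le_max_left _ _, le_max_right _ _⟩
  let s : ℕ → ℕ × ℕ := fun k => Nat.rec (g L) (fun _ x => g (max L (c * Real.log x.2))) k
  have hs0 : s 0 = g L := rfl
  have hs1 : ∀ k, s (k+1) = g (max L (c * Real.log (s k).2)) := fun k => rfl
  have hsL : ∀ k, L ≤ Real.log (s k).2 := by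
    intro k
    cases k with
    | zero => rw [hs0]; exact hg3 _
    | succ k => rw [hs1]; exact (le_max_left _ _).trans (hg3 _)
  have hsc : ∀ k, c * Real.log (s k).2 ≤ Real.log (s (k+1)).2 := by
    intro k
    rw [hs1]; exact (le_max_right _ _).trans (hg3 _)
  have hsex : ∀ k, ∃ x, s k = g x := by
    intro k
    cases k with
    | zero => exact ⟨_, hs0⟩
    | succ k => exact ⟨_, hs1 k⟩
  have hmono : Monotone fun k => Real.log (s k).2 := by
    apply monotone_nat_of_le_succ
    intro k
    have h1 := hsc k
    have h2 := hsL k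
    nlinarith
  have hlt : ∀ a b, a < b → c * Real.log (s a).2 ≤ Real.log (s b).2 := fun a b hab => (hsc a).trans (hmono hab)
  let t : Fin m → ℕ × ℕ := fun h => s (Fin.rev h)
  have htL : ∀ h, L ≤ Real.log (t h).2 := fun h => hsL _
  have htp : ∀ h, 0 < Real.log (t h).2 := fun h => hL0.trans_le (htL h)
  obtain ⟨A, hA0, hA⟩ : ∃ A : ℝ, 0 < A ∧ ∀ h, Real.log (t h).2 ≤ η * A := by
    refine ⟨(∑ h, Real.log (t h).2 + 1) / η, ?_, fun h => ?_⟩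
    · have := Finset.sum_nonneg fun h (_ : h ∈ Finset.univ) => (htp h).le
      positivity
    · rw [mul_div_cancel₀ _ hη0.ne']
      have := Finset.single_le_sum (f := fun h => Real.log (t h).2) (fun h _ => (htp h).le) (Finset.mem_univ h)
      linarith
  let r : Fin m → ℕ := fun h => ⌈A / Real.log (t h).2⌉₊
  have hr1 : ∀ h, A ≤ r h * Real.log (t h).2 := fun h => by
    rw [← div_le_iff₀ (htp h)]; exact Nat.le_ceil _
  have hr2 : ∀ h, r h * Real.log (t h).2 ≤ (1 + η) * A := fun h => by
    have h1 : (r h : ℝ) < A / Real.log (t h).2 + 1 := Nat.ceil_lt_add_one (by have := htp h; positivity)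
    have h2 : r h * Real.log (t h).2 ≤ (A / Real.log (t h).2 + 1) * Real.log (t h).2 :=
      mul_le_mul_of_nonneg_right h1.le (htp h).le
    rw [add_mul, div_mul_cancel₀ _ (htp h).ne'] at h2
    linarith [hA h]
  have hr3 : ∀ h, r h * Real.log (t h).2 ≤ 2 * A := fun h => by
    have := hr2 h
    nlinarith
  have hr0 : ∀ h, 0 < r h := fun h => by
    have := htp h
    exact Nat.ceil_pos.2 (by positivity)
  have hsum : ∑ h, (r h : ℝ) ≤ w * A := by
    have h1 : ∀ h, (r h : ℝ) ≤ 2 * A / L := fun h => by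
      rw [le_div_iff₀ hL0]
      refine le_trans ?_ (hr3 h)
      exact mul_le_mul_of_nonneg_left (htL h) (by positivity)
    refine (Finset.sum_le_sum fun h _ => h1 h).trans ?_
    simp only [Finset.sum_const, Finset.card_univ, Fintype.card_fin, nsmul_eq_mul]
    rw [mul_div_assoc', div_le_iff₀ hL0, hL]
    have : w * A * (2 * (m + 1) / w) = A * (2 * (m+1)) := by field_simp
    rw [this]
    nlinarith
  have hg : ∀ h, ∃ x, t h = g x := fun h => hsex _
  refine core δ η hδ hδ1 hη m (by linarith) ω α hα hα3 H r (fun h => (t h).1) (fun h => (t h).2) A hr0 ?_ ?_ ?_ hA0 hr1 hr2 ?_ ?_ ?_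
  · intro i j hij
    have h1 : c * Real.log (t j).2 ≤ Real.log (t i).2 := hlt _ _ (Fin.rev_lt_rev.2 hij)
    have h2 := hr3 i
    have h3 := hr1 j
    have h4 : (r i : ℝ) * (c * Real.log (t j).2) ≤ 2 * (r j * Real.log (t j).2) :=
      (mul_le_mul_of_nonneg_left h1 (by positivity)).trans (h2.trans (by linarith))
    have h5 : (r i : ℝ) * c ≤ 2 * r j := by
      refine le_of_mul_le_mul_right ?_ (htp j)
      linarith
    have h6 : (r i : ℝ) * (2/ω) ≤ 2 * r j := (mul_le_mul_of_nonneg_left hc2 (by positivity)).trans h5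
    rw [mul_div_assoc', div_le_iff₀ hω] at h6
    linarith
  · intro h
    obtain ⟨x, hx⟩ := hg h
    simp only [hx]; exact hg2 x
  · intro h
    obtain ⟨x, hx⟩ := hg h
    simp only [hx]; exact hg1 x
  · nlinarith
  · nlinarith
  · intro h
    obtain ⟨x, hx⟩ := hg h
    simp only [hx]; exact hg4 x

end WN

/-- WNEABC for the resulting equations of ∛2: for every ε > 0 there is K_ε > 0 with
max(p³, 2q³) < K_ε·(|d|·p·q·2)^{1+ε} for all convergents p/q of ∛2 with d ≠ 0. -/
theorem wneabc_cbrt_two :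
    ∀ ε > (0 : ℝ), ∃ K > (0 : ℝ), ∀ p q : ℕ, 0 < p → 0 < q → Nat.Coprime p q →
      |(2 : ℝ) ^ ((1 : ℝ) / 3) - (p : ℝ) / (q : ℝ)| < 1 / (q : ℝ) ^ 2 →
      ∀ d : ℤ, d = 2 * (q : ℤ) ^ 3 - (p : ℤ) ^ 3 → d ≠ 0 →
      max ((p : ℝ) ^ 3) (2 * (q : ℝ) ^ 3) <
        K * (|(d : ℝ)| * (p : ℝ) * (q : ℝ) * 2) ^ ((1 : ℝ) + ε) := by
  intro ε hε
  have hα0 : 0 < (2:ℝ) ^ ((1:ℝ)/3) := by positivity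
  have hα : ((2:ℝ) ^ ((1:ℝ)/3))^3 = 2 := by
    rw [← Real.rpow_natCast, ← Real.rpow_mul (by norm_num)]; norm_num
  generalize (2:ℝ) ^ ((1:ℝ)/3) = α at *
  have hα1 : 1.25 < α := by
    by_contra h; push Not at h
    have := pow_le_pow_left₀ hα0.le h 3
    norm_num at this; linarith
  have hα2 : α < 1.3 := by
    by_contra h; push Not at h
    have := pow_le_pow_left₀ (by norm_num) h 3
    norm_num at this; linarith
  obtain ⟨δ, hδ0, hδ1, hδ2⟩ : ∃ δ : ℝ, 0 < δ ∧ δ ≤ 1 ∧ δ * (1 + ε) ≤ 3 * ε := by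
    refine ⟨min 1 (3 * ε / (1 + ε)), by positivity, min_le_left _ _, ?_⟩
    have := min_le_right 1 (3 * ε / (1 + ε))
    rwa [le_div_iff₀ (by linarith)] at this
  obtain ⟨Q0, hQ0⟩ := WN.roth δ hδ0 hδ1 α hα (by rw [abs_of_pos hα0]; linarith)
  refine ⟨9 * ((Q0:ℝ) + 1)^3, by positivity, ?_⟩
  intro p q hp hq hpq happ d hd hd0
  have hqR : (1:ℝ) ≤ q := by exact_mod_cast hq
  have hq0 : (0:ℝ) < q := by linarith
  have hpR : (1:ℝ) ≤ p := by exact_mod_cast hp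
  have hbnd : (q:ℝ) ≤ p ∧ (p:ℝ) ≤ 2 * q := by
    rcases Nat.lt_or_ge q 2 with h | h
    · have : q = 1 := by omega
      subst this
      simp at happ
      rw [abs_lt] at happ
      refine ⟨by simpa using hpR, ?_⟩
      have : (p:ℝ) < 3 := by linarith [happ.1]
      have h2 : p < 3 := by exact_mod_cast this
      have h3 : p ≤ 2 := by omega
      have h4 : (p:ℝ) ≤ 2 := by exact_mod_cast h3
      simpa using h4
    · have h2 : (2:ℝ) ≤ q := by exact_mod_cast h
      have h3 : 1 / (q:ℝ)^2 ≤ 1/4 := by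
        apply one_div_le_one_div_of_le (by norm_num); nlinarith
      rw [abs_lt] at happ
      have h4 : (1:ℝ) ≤ p / q := by linarith [happ.2]
      have h5 : (p:ℝ) / q ≤ 2 := by linarith [happ.1]
      rw [le_div_iff₀ hq0] at h4
      rw [div_le_iff₀ hq0] at h5
      exact ⟨by linarith, h5⟩
  obtain ⟨hqp, hp2⟩ := hbnd
  have hd1 : (1:ℝ) ≤ |(d:ℝ)| := by exact_mod_cast Int.one_le_abs hd0
  have hmax : max ((p : ℝ) ^ 3) (2 * (q : ℝ) ^ 3) ≤ 8 * (q:ℝ)^3 := by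
    apply max_le
    · calc (p:ℝ)^3 ≤ (2 * q)^3 := by gcongr
        _ = _ := by ring
    · have : (0:ℝ) < (q:ℝ)^3 := by positivity
      linarith
  have hbase : |(d:ℝ)| * (q:ℝ)^2 ≤ |(d : ℝ)| * (p : ℝ) * (q : ℝ) * 2 := by
    have h1 : (q:ℝ)^2 ≤ p * q * 2 := by nlinarith
    calc |(d:ℝ)| * (q:ℝ)^2 ≤ |(d:ℝ)| * (p * q * 2) := by gcongr
      _ = _ := by ring
  have hb1 : 1 ≤ |(d : ℝ)| * (p : ℝ) * (q : ℝ) * 2 := by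
    refine le_trans ?_ hbase
    have : (1:ℝ) ≤ (q:ℝ)^2 := one_le_pow₀ hqR
    nlinarith
  have hQ1 : (1:ℝ) ≤ (Q0:ℝ) + 1 := le_add_of_nonneg_left (Nat.cast_nonneg Q0)
  refine lt_of_le_of_lt hmax ?_
  rcases Nat.lt_or_ge Q0 q with h | h
  · have hroth := hQ0 p q hpq h
    have hdq : Real.exp ((1 - δ) * Real.log q) ≤ |(d:ℝ)| := by
      have h1 : (d:ℝ) = (q:ℝ)^3 * ((α - p/q) * (α^2 + α * (p/q) + (p/q)^2)) := by
        have : (α - (p:ℝ)/q) * (α^2 + α * (p/q) + (p/q)^2) = α^3 - ((p:ℝ)/q)^3 := by ring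
        rw [this, hα, hd]
        push_cast
        field_simp
      rw [h1, abs_mul, abs_mul, abs_of_pos (by positivity : (0:ℝ) < (q:ℝ)^3)]
      have h2 : (1:ℝ) ≤ |α^2 + α * (p/q) + (p/q)^2| := by
        refine le_trans ?_ (le_abs_self _)
        have : (0:ℝ) ≤ p/q := by positivity
        nlinarith [mul_nonneg hα0.le this, sq_nonneg ((p:ℝ)/q)]
      have h3 : Real.exp ((1 - δ) * Real.log q) = (q:ℝ)^3 * Real.exp (-(2 + δ) * Real.log q) := by
        conv_rhs => rw [← Real.exp_log hq0, ← Real.exp_nat_mul, Real.exp_log hq0, ← Real.exp_add]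
        congr 1; push_cast; ring
      rw [h3]
      apply mul_le_mul_of_nonneg_left _ (by positivity)
      refine hroth.le.trans ?_
      exact le_mul_of_one_le_right (abs_nonneg _) h2
    have hb2 : Real.exp ((3 - δ) * Real.log q) ≤ |(d : ℝ)| * (p : ℝ) * (q : ℝ) * 2 := by
      refine le_trans ?_ hbase
      have h3 : Real.exp ((3 - δ) * Real.log q) = Real.exp ((1 - δ) * Real.log q) * (q:ℝ)^2 := by
        conv_rhs => rw [← Real.exp_log hq0, ← Real.exp_nat_mul, Real.exp_log hq0, ← Real.exp_add]
        congr 1; push_cast; ring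
      rw [h3]
      gcongr
    have hb3 : (q:ℝ)^3 ≤ (|(d : ℝ)| * (p : ℝ) * (q : ℝ) * 2) ^ ((1 : ℝ) + ε) := by
      refine le_trans ?_ (Real.rpow_le_rpow (Real.exp_pos _).le hb2 (by linarith))
      rw [← Real.exp_mul]
      conv_lhs => rw [← Real.exp_log hq0, ← Real.exp_nat_mul]
      apply Real.exp_le_exp.2
      have hl : 0 ≤ Real.log q := Real.log_nonneg hqR
      push_cast
      nlinarith
    have hq3 : (0:ℝ) < (q:ℝ)^3 := by positivity
    have hK : (9:ℝ) ≤ 9 * ((Q0:ℝ) + 1)^3 := by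
      have := one_le_pow₀ hQ1 (n := 3); linarith
    calc 8 * (q:ℝ)^3 < 9 * (q:ℝ)^3 := by linarith
      _ ≤ _ := by gcongr
  · have h1 : (q:ℝ) ≤ Q0 := by exact_mod_cast h
    have h2 : (1:ℝ) ≤ (|(d : ℝ)| * (p : ℝ) * (q : ℝ) * 2) ^ ((1 : ℝ) + ε) := Real.one_le_rpow hb1 (by linarith)
    have h3 : (q:ℝ)^3 ≤ ((Q0:ℝ) + 1)^3 := by gcongr; linarith
    have h4 : (0:ℝ) < ((Q0:ℝ)+1)^3 := by positivity
    calc 8 * (q:ℝ)^3 < 9 * ((Q0:ℝ) + 1)^3 := by linarith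
      _ ≤ _ := le_mul_of_one_le_right (by positivity) h2
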